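/- Let K be a field, A, B nonnegative integers, Λ ⊆ {0,...,A} × {0,...,B} an upper ladder with associated ladder region L, and M = [u_1,...,u_n | v_1,...,v_n] a bivector of positive integers with u_1 < ... < u_n ≤ A+1 and v_1 < ... < v_n ≤ B+1. Assume that (0, u_j − 1) ∈ L and (B − v_j + 1, A) ∈ L for all j = 1, ..., n. Let S_k = (x_k, y_k), k = 1, ..., m, be the inwards corners of the upper boundary of L, and for i = 1, ..., n set t_i = min({B + u_{n−j+1} − 1 − 2(i−j), A + v_{n−j+1} − 1 − 2(i−j) : 1 ≤ j ≤ i} ∪ {B − x_k + y_k − 2(i−1) : 1 ≤ k ≤ m}). Then there is a polynomial H ∈ ℤ[z] with H(1) ≠ 0 such that (Σ_{ℓ≥0} dim_K R_M(Y)_ℓ · z^ℓ) · (1 − z)^d = H, where d = (A + B + 3)n − Σ_{i=1}^n (u_i + v_i), and deg(H) − d = Σ_{i=1}^n t_i − (A + B + 1)n; that is, the a-invariant of R_M(Y) equals Σ_{i=1}^n t_i − (A + B + 1)n. -/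

import Mathlib

/-!
The quotient by the ladder ideal has a basis of monomials described by non-crossing lattice paths,
and the Hilbert series is read off from that basis.

Write a monomial as a multiset of points of the ladder region. Its support is *good* if it is
exhausted by peeling off `n` paths one after the other, where the `i`-th one runs from
`(0, u i - 1)` to `(B - v i + 1, A)` and `i = n, …, 1`. If the support is not good, it contains the
main diagonal of a generating minor (`exists_bad_chain`). The other terms of that minor have
smaller weight `∑ row * column`, so the good monomials span the quotient (`exists_reduction`,
`span_good`). For independence, label the points of a good monomial by the paths removing them, and
send the variable at row `i` and column `j` to the sum of the products `x_{s,i} * y_{s,j}` over the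
admissible labels `s`. This homomorphism kills the ideal, as it factors the generating minors
through matrices with a zero column (`phi_det`). The rearrangement inequality shows that the
coefficient of the labelled monomial is a functional triangular with respect to the weight
(`rearrange`, `exists_functional`).

The outermost path of a good set is determined by its NE-turns, which must belong to the set,
whereas the other points of the path are optional. Peeling off the paths therefore gives a Hilbert
series `H / (1 - z) ^ d`, where `d` counts the points of `n` non-crossing paths and `H` counts the
families of paths by their number of NE-turns (`fiber_sum`, `gen_fun`). The number of turns is
bounded by the corners of the region, the corners moving by `(1, -1)` whenever a path is removed,
with the end points of the removed path acting as further corners (`natDegree_numer_le`). The bound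
is attained by turns placed on diagonals (`coeff_numer_pos`, `diagSet_subset`). Since `H` has
nonnegative coefficients, `H(1) ≠ 0`, and its degree is the sum of these bounds.
-/

/-- A lattice path from `A` to `B`: a list of points of `ℤ × ℤ` whose consecutive
differences are the unit steps `(1,0)` or `(0,1)`, starting at `A` and ending at `B`. -/
def IsLatticePathFrom (P : List (ℤ × ℤ)) (A B : ℤ × ℤ) : Prop :=
  P.Chain' (fun p q => q = (p.1 + 1, p.2) ∨ q = (p.1, p.2 + 1)) ∧
    P.head? = some A ∧ P.getLast? = some B

/-- The list of NE-turns of a lattice path: the points of the path that are the end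
point of a vertical step and at the same time the starting point of a horizontal step. -/
def NETurns : List (ℤ × ℤ) → List (ℤ × ℤ)
  | p :: q :: r :: rest =>
      (if q = (p.1, p.2 + 1) ∧ r = (q.1 + 1, q.2) then [q] else []) ++ NETurns (q :: r :: rest)
  | _ => []

/-- `(x,y)` lies weakly south-east of `S` if `x ≥ S.1` or `y ≤ S.2`. -/
def WeaklySE (p S : ℤ × ℤ) : Prop := S.1 ≤ p.1 ∨ p.2 ≤ S.2

/-- `(x,y)` lies weakly north-west of `T` if `x ≤ T.1` or `y ≥ T.2`. -/
def WeaklyNW (p T : ℤ × ℤ) : Prop := p.1 ≤ T.1 ∨ T.2 ≤ p.2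

/-- A path stays weakly south-east of `S` if every point on it does. -/
def StaysSE (P : List (ℤ × ℤ)) (S : ℤ × ℤ) : Prop := ∀ p ∈ P, WeaklySE p S

/-- A path stays weakly north-west of `T` if every point on it does. -/
def StaysNW (P : List (ℤ × ℤ)) (T : ℤ × ℤ) : Prop := ∀ p ∈ P, WeaklyNW p T

/-- A family of lattice paths is non-intersecting if no two of its members share a point. -/
def NonIntersecting {n : ℕ} (F : Fin n → List (ℤ × ℤ)) : Prop :=
  ∀ i j, i ≠ j → ∀ p, p ∈ F i → p ∉ F j

/-- `Λ` is a ladder: together with any two positions `(i,j) ≤ (i',j')` it contains the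
whole interval between them. -/
def IsLadder {A B : ℕ} (Λ : Set (Fin (A + 1) × Fin (B + 1))) : Prop :=
  ∀ p ∈ Λ, ∀ p' ∈ Λ, p.1 ≤ p'.1 → p.2 ≤ p'.2 →
    ∀ (s : Fin (A + 1)) (t : Fin (B + 1)),
      p.1 ≤ s → s ≤ p'.1 → p.2 ≤ t → t ≤ p'.2 → (s, t) ∈ Λ

/-- The ladder region associated with a ladder `Λ`: the set of points `(j, A−i)` for
`(i,j) ∈ Λ`. -/
def ladderRegion {A B : ℕ} (Λ : Set (Fin (A + 1) × Fin (B + 1))) : Set (ℤ × ℤ) :=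
  {p | ∃ q ∈ Λ, p = (((q.2 : ℕ) : ℤ), (A : ℤ) - ((q.1 : ℕ) : ℤ))}

open Classical in
/-- The matrix `Y` associated with a ladder `Λ`: the entry at a position of `Λ` is the
corresponding variable of the polynomial ring `K[Y]`, all other entries are `0`. -/
noncomputable def ladderMatrix (K : Type*) [Field K] {A B : ℕ}
    (Λ : Set (Fin (A + 1) × Fin (B + 1))) :
    Matrix (Fin (A + 1)) (Fin (B + 1)) (MvPolynomial {q // q ∈ Λ} K) :=
  fun i j => if h : (i, j) ∈ Λ then MvPolynomial.X ⟨(i, j), h⟩ else 0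

/-- The ladder determinantal ideal cogenerated by the bivector
`M = [u 1,...,u n | v 1,...,v n]` (with the conventions `u (n+1) = A+2`, `v (n+1) = B+2`
imposed as hypotheses in the theorems): it is generated, for `1 ≤ t ≤ n+1`, by the `t×t`
minors of `Y` all of whose positions lie in `Λ` and whose rows all lie among the last
`u t − 1` rows, or whose columns all lie among the last `v t − 1` columns. -/
noncomputable def ladderIdeal (K : Type*) [Field K] {A B : ℕ}
    (Λ : Set (Fin (A + 1) × Fin (B + 1))) (n : ℕ) (u v : ℕ → ℕ) :
    Ideal (MvPolynomial {q // q ∈ Λ} K) :=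
  Ideal.span {f | ∃ t : ℕ, 1 ≤ t ∧ t ≤ n + 1 ∧
    ∃ (r : Fin t → Fin (A + 1)) (c : Fin t → Fin (B + 1)),
      StrictMono r ∧ StrictMono c ∧ (∀ k l, (r k, c l) ∈ Λ) ∧
      ((∀ k, A + 2 ≤ (r k : ℕ) + u t) ∨ (∀ l, B + 2 ≤ (c l : ℕ) + v t)) ∧
      f = (((ladderMatrix K Λ).submatrix r c).det)}

/-- The dimension of the degree-`ℓ` homogeneous component of the quotient of a polynomial
ring by a (homogeneous) ideal `I`: the image of the space of homogeneous polynomials of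
degree `ℓ` in the quotient. -/
noncomputable def quotDim (K : Type*) [Field K] {σ : Type*}
    (I : Ideal (MvPolynomial σ K)) (ℓ : ℕ) : ℕ :=
  Module.finrank K
    (Submodule.map (Ideal.Quotient.mkₐ K I).toLinearMap
      (MvPolynomial.homogeneousSubmodule σ K ℓ))

/-- The Hilbert series `Σ_ℓ dim_K (R_M(Y))_ℓ zˡ`, as a power series over `ℤ`. -/
noncomputable def hilbertSeries (K : Type*) [Field K] {σ : Type*}
    (I : Ideal (MvPolynomial σ K)) : PowerSeries ℤ :=
  PowerSeries.mk fun ℓ => (quotDim K I ℓ : ℤ)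

/-- The recursively defined regions `L⁽ⁱ⁾` of Theorem 5, counted downwards from
`L⁽ⁿ⁺¹⁾ = L`; `Lseq L E1 A2 j` is `L⁽ⁿ⁺¹⁻ʲ⁾`, where `E1 j` resp. `A2 j` are the first
coordinate of `E⁽ⁿ⁻ʲ⁾` resp. the second coordinate of `A⁽ⁿ⁻ʲ⁾`. -/
def Lseq (L : Set (ℤ × ℤ)) (E1 A2 : ℕ → ℤ) : ℕ → Set (ℤ × ℤ)
  | 0 => L
  | j + 1 => {P ∈ Lseq L E1 A2 j |
      P.1 ≤ E1 j ∧ A2 j ≤ P.2 ∧ (P.1 + 1, P.2 - 1) ∈ Lseq L E1 A2 j}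

namespace LadderAInv
open Classical

/-! ### Lattice paths and their turns -/

/-- The NE-turns of the path peeled off from a finite point set `S`: the points `p` of `S`
strictly left of the column `e` and strictly above the row `a` such that every other point of `S`
weakly to the left of `p` is strictly lower. They are the NE-turns of the lattice path from
`(0, a)` to `(e, A)` that bounds `S` on the upper left. A set `T` with `turns a e T = T` is
exactly the set of NE-turns of such a path. -/
noncomputable def turns (a e : ℤ) (S : Finset (ℤ × ℤ)) : Finset (ℤ × ℤ) :=
  S.filter fun p => p.1 < e ∧ a < p.2 ∧ ∀ q ∈ S, q ≠ p → q.1 ≤ p.1 → q.2 < p.2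

/-- The points strictly on the lower right of the path with NE-turns `T`: strictly to the right of
and strictly below a turn, or under the starting row `a`, or beyond the final column `e`. -/
def Below (a e : ℤ) (T : Finset (ℤ × ℤ)) (p : ℤ × ℤ) : Prop :=
  (∃ t ∈ T, t.1 < p.1 ∧ p.2 < t.2) ∨ p.2 < a ∨ e < p.1

/-- The set of points of the lattice path from `(0, a)` to `(e, A)` with NE-turns `T`. -/
noncomputable def pathOf (A a e : ℤ) (T : Finset (ℤ × ℤ)) : Finset (ℤ × ℤ) :=
  (Finset.Icc 0 e ×ˢ Finset.Icc a A).filter fun p =>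
    ¬ Below a e T p ∧ (p.1 = e ∨ p.2 = a ∨ ∃ t ∈ T, t.1 ≤ p.1 ∧ p.2 ≤ t.2)

/-- `Good a e k S`: the finite set `S` is exhausted by peeling off `k` paths, from `(0, a i)` to
`(e i, A)` for `i = k, …, 1`; at each step the points strictly below the peeled path remain. -/
def Good (a e : ℕ → ℤ) : ℕ → Finset (ℤ × ℤ) → Prop
  | 0, S => S = ∅
  | k + 1, S => Good a e k
      (S.filter (Below (a (k + 1)) (e (k + 1)) (turns (a (k + 1)) (e (k + 1)) S)))

lemma mem_turns {a e : ℤ} {S : Finset (ℤ × ℤ)} {p : ℤ × ℤ} :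
    p ∈ turns a e S ↔ p ∈ S ∧ p.1 < e ∧ a < p.2 ∧ ∀ q ∈ S, q ≠ p → q.1 ≤ p.1 → q.2 < p.2 := by
  simp [turns]

lemma turns_subset {a e : ℤ} {S : Finset (ℤ × ℤ)} : turns a e S ⊆ S := Finset.filter_subset _ _

lemma turns_idem {a e : ℤ} {S : Finset (ℤ × ℤ)} : turns a e (turns a e S) = turns a e S := by
  ext p
  rw [mem_turns]
  constructor
  · exact fun h => h.1
  · intro h
    have h' := mem_turns.1 h
    exact ⟨h, h'.2.1, h'.2.2.1, fun q hq => h'.2.2.2 q (turns_subset hq)⟩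

lemma exists_turn {a e : ℤ} {S : Finset (ℤ × ℤ)} {p : ℤ × ℤ} (hp : p ∈ S) (h1 : p.1 < e)
    (h2 : a < p.2) : ∃ t ∈ turns a e S, t.1 ≤ p.1 ∧ p.2 ≤ t.2 := by
  obtain ⟨q, hq, hmax⟩ := Finset.exists_max_image (S.filter fun q => q.1 ≤ p.1) Prod.snd
    ⟨p, by simp [hp]⟩
  obtain ⟨t, ht, hmin⟩ := Finset.exists_min_image
    (S.filter fun t => t.1 ≤ p.1 ∧ t.2 = q.2) Prod.fst ⟨q, by simp_all⟩
  simp only [Finset.mem_filter] at hq hmax ht hmin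
  have hpq := hmax p ⟨hp, le_rfl⟩
  refine ⟨t, mem_turns.2 ⟨ht.1, by omega, by omega, ?_⟩, ht.2.1, by omega⟩
  intro s hs hst hle
  have h3 := hmax s ⟨hs, by omega⟩
  by_contra h4
  have h5 := hmin s ⟨hs, by omega, by omega⟩
  exact hst (Prod.ext (by omega) (by omega))

lemma mem_pathOf {A a e : ℤ} {T : Finset (ℤ × ℤ)} {p : ℤ × ℤ} :
    p ∈ pathOf A a e T ↔ (0 ≤ p.1 ∧ p.1 ≤ e) ∧ (a ≤ p.2 ∧ p.2 ≤ A) ∧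
      (∀ t ∈ T, t.1 < p.1 → t.2 ≤ p.2) ∧
      (p.1 = e ∨ p.2 = a ∨ ∃ t ∈ T, t.1 ≤ p.1 ∧ p.2 ≤ t.2) := by
  rw [pathOf, Finset.mem_filter, Finset.mem_product, Finset.mem_Icc, Finset.mem_Icc, Below]
  constructor
  · rintro ⟨⟨h1, h2⟩, h3, h4⟩
    push Not at h3
    exact ⟨h1, h2, h3.1, h4⟩
  · rintro ⟨h1, h2, h3, h4⟩
    refine ⟨⟨h1, h2⟩, ?_, h4⟩
    push Not
    exact ⟨h3, h2.1, h1.2⟩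

/-- Every point of `S` lies on the path through the turns of `S` or strictly below it. -/
lemma path_or_below {A a e : ℤ} {S : Finset (ℤ × ℤ)} (hS : ∀ p ∈ S, 0 ≤ p.1 ∧ p.2 ≤ A)
    {p : ℤ × ℤ} (hp : p ∈ S) (hb : ¬ Below a e (turns a e S) p) :
    p ∈ pathOf A a e (turns a e S) := by
  have hb' := hb
  unfold Below at hb'
  push Not at hb'
  obtain ⟨h1, h2, h3⟩ := hb'
  refine mem_pathOf.2 ⟨⟨(hS p hp).1, h3⟩, ⟨h2, (hS p hp).2⟩, h1, ?_⟩
  by_cases h4 : p.1 = e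
  · exact Or.inl h4
  by_cases h5 : p.2 = a
  · exact Or.inr (Or.inl h5)
  exact Or.inr (Or.inr (exists_turn hp (by omega) (by omega)))

lemma turn_mem_path {A a e : ℤ} {T : Finset (ℤ × ℤ)} (hT : turns a e T = T)
    (hbox : ∀ p ∈ T, 0 ≤ p.1 ∧ p.2 ≤ A) : T ⊆ pathOf A a e T := by
  intro p hp
  have h := hT ▸ hp
  rw [mem_turns] at h
  obtain ⟨-, h1, h2, h3⟩ := h
  have := hbox p hp
  refine mem_pathOf.2 ⟨⟨this.1, h1.le⟩, ⟨h2.le, this.2⟩, ?_, Or.inr (Or.inr ⟨p, hp, le_rfl, le_rfl⟩)⟩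
  intro t ht htp
  exact (h3 t ht (by rintro rfl; omega) htp.le).le

/-- Adding to `T` points of its path and points below that path does not change the turns. -/
lemma turns_eq_of_between {A a e : ℤ} {S T : Finset (ℤ × ℤ)} (hT : turns a e T = T)
    (hTS : T ⊆ S) (hS : ∀ p ∈ S, p ∈ pathOf A a e T ∨ Below a e T p) : turns a e S = T := by
  have key : ∀ t ∈ T, t.1 < e ∧ a < t.2 ∧ ∀ q ∈ T, q ≠ t → q.1 ≤ t.1 → q.2 < t.2 := by
    intro t ht
    rw [← hT, mem_turns] at ht
    exact ht.2
  ext p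
  rw [mem_turns]
  constructor
  · rintro ⟨hp, h1, h2, h3⟩
    rcases hS p hp with h | h
    · rw [mem_pathOf] at h
      rcases h.2.2.2 with h | h | ⟨t, ht, h4, h5⟩
      · omega
      · omega
      · by_cases htp : t = p
        · exact htp ▸ ht
        · have := h3 t (hTS ht) htp h4
          omega
    · rcases h with ⟨t, ht, h4, h5⟩ | h | h
      · have := h3 t (hTS ht) (by rintro rfl; omega) h4.le
        omega
      · omega
      · omega
  · intro hp
    obtain ⟨h1, h2, h3⟩ := key p hp
    refine ⟨hTS hp, h1, h2, ?_⟩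
    intro q hq hqp hle
    rcases hS q hq with h | h
    · rw [mem_pathOf] at h
      rcases h.2.2.2 with h | h | ⟨t, ht, h4, h5⟩
      · omega
      · omega
      · by_cases htp : t = p
        · subst htp
          rcases lt_or_eq_of_le h5 with h6 | h6
          · exact h6
          · exact absurd (Prod.ext (by omega) h6) hqp
        · have := h3 t ht htp (by omega)
          omega
    · rcases h with ⟨t, ht, h4, h5⟩ | h | h
      · have := h3 t ht (by rintro rfl; omega) (by omega)
        omega
      · omega
      · omega

/-- Two points of a path are comparable. -/
lemma path_chain {A a e : ℤ} {T : Finset (ℤ × ℤ)} {p q : ℤ × ℤ}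
    (hp : p ∈ pathOf A a e T) (hq : q ∈ pathOf A a e T) (h : p.1 < q.1) : p.2 ≤ q.2 := by
  rw [mem_pathOf] at hp hq
  rcases hp.2.2.2 with h1 | h1 | ⟨t, ht, h1, h2⟩
  · omega
  · omega
  · have := hq.2.2.1 t ht (by omega)
    omega

/-- A lattice path meets each antidiagonal `x + y = s`, `a ≤ s ≤ e + A`, in exactly one point. -/
lemma card_pathOf {A a e : ℤ} {T : Finset (ℤ × ℤ)} (ha : a ≤ A) (he : 0 ≤ e)
    (hbox : ∀ p ∈ T, 0 ≤ p.1 ∧ p.2 ≤ A) :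
    (pathOf A a e T).card = (e + A - a + 1).toNat := by
  have : (pathOf A a e T).card = (Finset.Icc a (e + A)).card := by
    apply Finset.card_bij (fun p _ => p.1 + p.2)
    · intro p hp
      rw [mem_pathOf] at hp
      rw [Finset.mem_Icc]
      omega
    · intro p hp q hq h
      rcases lt_trichotomy p.1 q.1 with h1 | h1 | h1
      · have := path_chain hp hq h1
        omega
      · exact Prod.ext h1 (by omega)
      · have := path_chain hq hp h1
        omega
    · intro s hs
      rw [Finset.mem_Icc] at hs
      -- On the antidiagonal, the path point is the rightmost point that is not below the path.
      obtain ⟨x, hx, hmax⟩ := Finset.exists_max_image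
        ((Finset.Icc (max 0 (s - A)) (min e (s - a))).filter
          fun x => ∀ t ∈ T, t.1 < x → t.2 ≤ s - x) id
        ⟨max 0 (s - A), by
          simp only [Finset.mem_filter, Finset.mem_Icc]
          refine ⟨by omega, ?_⟩
          intro t ht h
          have := hbox t ht
          omega⟩
      simp only [Finset.mem_filter, Finset.mem_Icc, id] at hx hmax
      refine ⟨(x, s - x), mem_pathOf.2 ⟨⟨by simp only; omega, by simp only; omega⟩,
        ⟨by simp only; omega, by simp only; omega⟩, hx.2, ?_⟩, by simp only; omega⟩
      simp only
      by_contra hcon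
      push Not at hcon
      obtain ⟨h1, h2, h3⟩ := hcon
      have := hmax (x + 1) ⟨by omega, by
        intro t ht htx
        have := h3 t ht (by omega)
        omega⟩
      omega
  rw [this, Int.card_Icc]
  congr 1
  ring


/-! ### Generating function of the good sets -/

/-- A finite region in the box `[0, B] × [0, A]`, closed under moving right and down within the
box, which contains the end points of the paths with indices `1, …, k`. -/
structure Region (A B : ℤ) (a e : ℕ → ℤ) (k : ℕ) (G : Finset (ℤ × ℤ)) : Prop where
  box : ∀ p ∈ G, 0 ≤ p.1 ∧ p.1 ≤ B ∧ 0 ≤ p.2 ∧ p.2 ≤ A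
  closed : ∀ p ∈ G, ∀ q : ℤ × ℤ, p.1 ≤ q.1 → q.1 ≤ B → 0 ≤ q.2 → q.2 ≤ p.2 → q ∈ G
  ends : ∀ i, 1 ≤ i → i ≤ k → (0, a i) ∈ G ∧ (e i, A) ∈ G

variable {A B : ℤ} {a e : ℕ → ℤ} {k : ℕ} {G : Finset (ℤ × ℤ)}

lemma Region.path_subset (hG : Region A B a e (k + 1) G) {T : Finset (ℤ × ℤ)} (hT : T ⊆ G) :
    pathOf A (a (k + 1)) (e (k + 1)) T ⊆ G := by
  intro p hp
  rw [mem_pathOf] at hp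
  obtain ⟨h1, h2⟩ := hG.ends (k + 1) (by omega) le_rfl
  have hb1 := hG.box _ h1
  have hb2 := hG.box _ h2
  simp only at hb1 hb2
  rcases hp.2.2.2 with h | h | ⟨t, ht, h3, h4⟩
  · exact hG.closed _ h2 p (by simp only; omega) (by omega) (by omega) (by simp only; omega)
  · exact hG.closed _ h1 p (by simp only; omega) (by omega) (by omega) (by simp only; omega)
  · exact hG.closed _ (hT ht) p h3 (by omega) (by omega) h4

lemma Region.below (ham : ∀ i j, 1 ≤ i → i < j → j ≤ k + 1 → a i < a j)
    (hem : ∀ i j, 1 ≤ i → i < j → j ≤ k + 1 → e j < e i)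
    (hG : Region A B a e (k + 1) G) (T : Finset (ℤ × ℤ)) :
    Region A B a e k (G.filter (Below (a (k + 1)) (e (k + 1)) T)) where
  box p hp := hG.box p (Finset.mem_filter.1 hp).1
  closed p hp q h1 h2 h3 h4 := by
    rw [Finset.mem_filter] at hp ⊢
    refine ⟨hG.closed p hp.1 q h1 h2 h3 h4, ?_⟩
    rcases hp.2 with ⟨t, ht, h5, h6⟩ | h | h
    · exact Or.inl ⟨t, ht, by omega, by omega⟩
    · exact Or.inr (Or.inl (by omega))
    · exact Or.inr (Or.inr (by omega))
  ends i h1 h2 := by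
    obtain ⟨h3, h4⟩ := hG.ends i h1 (by omega)
    rw [Finset.mem_filter, Finset.mem_filter]
    exact ⟨⟨h3, Or.inr (Or.inl (ham i (k + 1) h1 (by omega) le_rfl))⟩,
      ⟨h4, Or.inr (Or.inr (hem i (k + 1) h1 (by omega) le_rfl))⟩⟩

/-- The sets of NE-turns of lattice paths from `(0, a)` to `(e, A)` inside `G`. -/
noncomputable def turnSets (a e : ℤ) (G : Finset (ℤ × ℤ)) : Finset (Finset (ℤ × ℤ)) :=
  G.powerset.filter fun T => turns a e T = T

/-- The generating function, by total number of NE-turns, of the families of `k` non-crossing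
paths in `G`: the turns of the path with index `k` are chosen first, and the other paths have their
turns strictly below it. This is the numerator of the Hilbert series. -/
noncomputable def numer (a e : ℕ → ℤ) : ℕ → Finset (ℤ × ℤ) → Polynomial ℕ
  | 0, _ => 1
  | k + 1, G => ∑ T ∈ turnSets (a (k + 1)) (e (k + 1)) G,
      Polynomial.X ^ T.card * numer a e k (G.filter (Below (a (k + 1)) (e (k + 1)) T))

lemma sum_interval {R : Type*} [CommRing R] (w : R) (D : Finset (ℤ × ℤ)) :
    ∑ U ∈ D.powerset, w ^ U.card = (1 + w) ^ D.card := by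
  have := Finset.sum_pow_mul_eq_add_pow w 1 D
  simpa [add_comm] using this

/-- The good subsets of `G` with outermost path of turns `T` consist of `T`, an arbitrary set of
further points of that path, and a good set strictly below it. -/
lemma fiber_sum {R : Type*} [CommRing R] (w : R) (hG : Region A B a e (k + 1) G)
    {T : Finset (ℤ × ℤ)} (hT : T ∈ turnSets (a (k + 1)) (e (k + 1)) G) :
    ∑ S ∈ (G.powerset.filter (Good a e (k + 1))).filter
        (fun S => turns (a (k + 1)) (e (k + 1)) S = T), w ^ S.card =
      w ^ T.card * (1 + w) ^ ((pathOf A (a (k + 1)) (e (k + 1)) T).card - T.card) *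
        ∑ S ∈ (G.filter (Below (a (k + 1)) (e (k + 1)) T)).powerset.filter (Good a e k),
          w ^ S.card := by
  rw [turnSets, Finset.mem_filter, Finset.mem_powerset] at hT
  obtain ⟨hTG, hTT⟩ := hT
  set P := pathOf A (a (k + 1)) (e (k + 1)) T with hP
  set Bl := Below (a (k + 1)) (e (k + 1)) T with hBl
  have hbox : ∀ p ∈ T, 0 ≤ p.1 ∧ p.2 ≤ A := fun p hp =>
    ⟨(hG.box p (hTG hp)).1, (hG.box p (hTG hp)).2.2.2⟩
  have hTP : T ⊆ P := turn_mem_path hTT hbox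
  have hPG : P ⊆ G := hG.path_subset hTG
  have hPB : ∀ p ∈ P, ¬ Bl p := fun p hp => (Finset.mem_filter.1 hp).2.1
  rw [← Finset.card_sdiff_of_subset hTP, ← sum_interval, mul_assoc, Finset.sum_mul_sum,
    ← Finset.sum_product', Finset.mul_sum]
  symm
  refine Finset.sum_bij' (fun x _ => T ∪ x.1 ∪ x.2)
    (fun S _ => ((S.filter fun p => ¬ Bl p) \ T, S.filter Bl)) ?_ ?_ ?_ ?_ ?_
  · rintro ⟨U, S⟩ h
    simp only [Finset.mem_product, Finset.mem_powerset, Finset.mem_filter] at h ⊢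
    obtain ⟨hU, hS, hgood⟩ := h
    have hS1 : ∀ p ∈ S, p ∈ G ∧ Bl p := fun p hp => by simpa using hS hp
    have hU1 : ∀ p ∈ U, p ∈ P ∧ p ∉ T := fun p hp => by simpa using hU hp
    have hturn : turns (a (k + 1)) (e (k + 1)) (T ∪ U ∪ S) = T := by
      apply turns_eq_of_between (A := A) hTT
      · exact fun p hp => by simp [hp]
      · intro p hp
        simp only [Finset.mem_union] at hp
        rcases hp with (hp | hp) | hp
        · exact Or.inl (hTP hp)
        · exact Or.inl (hU1 p hp).1
        · exact Or.inr (hS1 p hp).2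
    refine ⟨⟨?_, ?_⟩, hturn⟩
    · intro p hp
      simp only [Finset.mem_union] at hp
      rcases hp with (hp | hp) | hp
      · exact hTG hp
      · exact hPG (hU1 p hp).1
      · exact (hS1 p hp).1
    · rw [Good, hturn]
      convert hgood using 1
      ext p
      simp only [Finset.mem_filter, Finset.mem_union]
      constructor
      · rintro ⟨(hp | hp) | hp, hb⟩
        · exact absurd hb (hPB p (hTP hp))
        · exact absurd hb (hPB p (hU1 p hp).1)
        · exact hp
      · exact fun hp => ⟨Or.inr hp, (hS1 p hp).2⟩
  · intro S h
    simp only [Finset.mem_product, Finset.mem_powerset, Finset.mem_filter] at h ⊢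
    obtain ⟨⟨hSG, hgood⟩, hturn⟩ := h
    refine ⟨?_, ?_, ?_⟩
    · intro p hp
      simp only [Finset.mem_sdiff, Finset.mem_filter] at hp ⊢
      refine ⟨?_, hp.2⟩
      have := path_or_below (A := A) (a := a (k + 1)) (e := e (k + 1))
        (fun p hp => ⟨(hG.box p (hSG hp)).1, (hG.box p (hSG hp)).2.2.2⟩) hp.1.1
      rw [hturn] at this
      exact this hp.1.2
    · intro p hp
      simp only [Finset.mem_filter] at hp ⊢
      exact ⟨hSG hp.1, hp.2⟩
    · rw [Good, hturn] at hgood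
      exact hgood
  · rintro ⟨U, S⟩ h
    simp only [Finset.mem_product, Finset.mem_powerset, Finset.mem_filter] at h
    obtain ⟨hU, hS, hgood⟩ := h
    have hS1 : ∀ p ∈ S, p ∈ G ∧ Bl p := fun p hp => by simpa using hS hp
    have hU1 : ∀ p ∈ U, p ∈ P ∧ p ∉ T := fun p hp => by simpa using hU hp
    have hT1 : ∀ p ∈ T, ¬ Bl p := fun p hp => hPB p (hTP hp)
    ext p
    · simp only [Finset.mem_sdiff, Finset.mem_filter, Finset.mem_union]
      constructor
      · rintro ⟨⟨(hp | hp) | hp, hb⟩, hn⟩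
        · exact absurd hp hn
        · exact hp
        · exact absurd (hS1 p hp).2 hb
      · exact fun hp => ⟨⟨Or.inl (Or.inr hp), hPB p (hU1 p hp).1⟩, (hU1 p hp).2⟩
    · simp only [Finset.mem_filter, Finset.mem_union]
      constructor
      · rintro ⟨(hp | hp) | hp, hb⟩
        · exact absurd hb (hT1 p hp)
        · exact absurd hb (hPB p (hU1 p hp).1)
        · exact hp
      · exact fun hp => ⟨Or.inr hp, (hS1 p hp).2⟩
  · intro S h
    simp only [Finset.mem_powerset, Finset.mem_filter] at h
    obtain ⟨⟨hSG, hgood⟩, hturn⟩ := h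
    have hTS : T ⊆ S := hturn ▸ turns_subset
    ext p
    simp only [Finset.mem_sdiff, Finset.mem_filter, Finset.mem_union]
    have := @hTS p
    by_cases hb : Bl p <;> by_cases ht : p ∈ T <;> simp_all
  · rintro ⟨U, S⟩ h
    simp only [Finset.mem_product, Finset.mem_powerset, Finset.mem_filter] at h
    obtain ⟨hU, hS, hgood⟩ := h
    have hS1 : ∀ p ∈ S, p ∈ G ∧ Bl p := fun p hp => by simpa using hS hp
    have hU1 : ∀ p ∈ U, p ∈ P ∧ p ∉ T := fun p hp => by simpa using hU hp
    have hd1 : Disjoint T U := Finset.disjoint_left.2 fun p hp hq => (hU1 p hq).2 hp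
    have hd2 : Disjoint (T ∪ U) S := Finset.disjoint_left.2 fun p hp hq => by
      rcases Finset.mem_union.1 hp with hp | hp
      · exact hPB p (hTP hp) (hS1 p hq).2
      · exact hPB p (hU1 p hp).1 (hS1 p hq).2
    simp only
    rw [Finset.card_union_of_disjoint hd2, Finset.card_union_of_disjoint hd1]
    ring

open PowerSeries in
/-- The relation `1 + X * V = V` says that `V = 1 / (1 - X)`. The weight `X * V` of a point is the
series `X + X ^ 2 + ⋯` of its possible positive multiplicities; each of the `e i + A - a i + 1`
points of the `i`-th path contributes a factor `V`. -/
lemma gen_fun (V : ℤ⟦X⟧) (hV : 1 + X * V = V) :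
    ∀ (k : ℕ) (G : Finset (ℤ × ℤ)), Region A B a e k G →
    (∀ i j, 1 ≤ i → i < j → j ≤ k → a i < a j) →
    (∀ i j, 1 ≤ i → i < j → j ≤ k → e j < e i) →
    ∑ S ∈ G.powerset.filter (Good a e k), (X * V) ^ S.card =
      (((numer a e k G).map (Nat.castRingHom ℤ) : Polynomial ℤ) : ℤ⟦X⟧) *
        V ^ (∑ i ∈ Finset.Icc 1 k, (e i + A - a i + 1).toNat) := by
  intro k
  induction k with
  | zero =>
    intro G _ _ _
    have : G.powerset.filter (Good a e 0) = {∅} := by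
      ext S
      rw [Finset.mem_filter, Finset.mem_powerset, Good, Finset.mem_singleton]
      exact ⟨fun h => h.2, fun h => ⟨by simp [h], h⟩⟩
    rw [this]
    simp [numer]
  | succ k ih =>
    intro G hG ham hem
    have hmaps : ∀ S ∈ G.powerset.filter (Good a e (k + 1)),
        turns (a (k + 1)) (e (k + 1)) S ∈ turnSets (a (k + 1)) (e (k + 1)) G := by
      intro S hS
      rw [Finset.mem_filter, Finset.mem_powerset] at hS
      rw [turnSets, Finset.mem_filter, Finset.mem_powerset]
      exact ⟨turns_subset.trans hS.1, turns_idem⟩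
    rw [← Finset.sum_fiberwise_of_maps_to hmaps, numer, Polynomial.map_sum]
    rw [← Polynomial.coeToPowerSeries.ringHom_apply, map_sum, Finset.sum_mul]
    refine Finset.sum_congr rfl fun T hT => ?_
    rw [fiber_sum (A := A) _ hG hT, ih _ (hG.below ham hem T)
      (fun i j h1 h2 h3 => ham i j h1 h2 (by omega)) (fun i j h1 h2 h3 => hem i j h1 h2 (by omega)),
      hV]
    rw [turnSets, Finset.mem_filter, Finset.mem_powerset] at hT
    have hbox : ∀ p ∈ T, 0 ≤ p.1 ∧ p.2 ≤ A := fun p hp =>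
      ⟨(hG.box p (hT.1 hp)).1, (hG.box p (hT.1 hp)).2.2.2⟩
    have hcard := Finset.card_le_card (turn_mem_path hT.2 hbox)
    obtain ⟨h1, h2⟩ := hG.ends (k + 1) (by omega) le_rfl
    have hb1 := hG.box _ h1
    have hb2 := hG.box _ h2
    simp only at hb1 hb2
    rw [card_pathOf hb1.2.2.2 hb2.1 hbox] at hcard ⊢
    rw [Finset.sum_Icc_succ_top (by omega), pow_add, ← Nat.add_sub_of_le hcard, pow_add]
    simp only [Nat.add_sub_cancel_left, Polynomial.map_mul, Polynomial.map_pow, Polynomial.map_X,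
      map_mul, map_pow, Polynomial.coeToPowerSeries.ringHom_apply, Polynomial.coe_X]
    ring


/-! ### The degree of the numerator -/

/-- If no turn lies strictly above and to the left of `c`, then the turns weakly to the right of
`c.1` occupy distinct columns of `[c.1, e)` and the remaining ones distinct rows of `(a, c.2]`. -/
lemma card_turns_le {a e : ℤ} {T : Finset (ℤ × ℤ)} (hT : turns a e T = T) {c : ℤ × ℤ}
    (hc1 : c.1 ≤ e) (hc2 : a ≤ c.2) (hc : ∀ p ∈ T, WeaklySE p c) :
    (T.card : ℤ) ≤ e - a + (c.2 - c.1) := by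
  have key : ∀ t ∈ T, t.1 < e ∧ a < t.2 ∧ ∀ q ∈ T, q ≠ t → q.1 ≤ t.1 → q.2 < t.2 := by
    intro t ht
    rw [← hT, mem_turns] at ht
    exact ht.2
  have h1 : (T.filter fun p => c.1 ≤ p.1).card ≤ (Finset.Ico c.1 e).card := by
    apply Finset.card_le_card_of_injOn Prod.fst
    · intro p hp
      simp only [Finset.coe_filter, Set.mem_ofPred_eq] at hp
      simp only [Finset.coe_Ico, Set.mem_Ico]
      exact ⟨hp.2, (key p hp.1).1⟩
    · intro p hp q hq hpq
      simp only [Finset.coe_filter, Set.mem_ofPred_eq] at hp hq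
      by_contra hne
      have h1 := (key p hp.1).2.2 q hq.1 (Ne.symm hne) hpq.ge
      have h2 := (key q hq.1).2.2 p hp.1 hne hpq.le
      omega
  have h2 : (T.filter fun p => ¬ c.1 ≤ p.1).card ≤ (Finset.Ioc a c.2).card := by
    apply Finset.card_le_card_of_injOn Prod.snd
    · intro p hp
      simp only [Finset.coe_filter, Set.mem_ofPred_eq] at hp
      simp only [Finset.coe_Ioc, Set.mem_Ioc]
      refine ⟨(key p hp.1).2.1, ?_⟩
      rcases hc p hp.1 with h | h
      · exact absurd h hp.2
      · exact h
    · intro p hp q hq hpq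
      simp only [Finset.coe_filter, Set.mem_ofPred_eq] at hp hq
      by_contra hne
      rcases le_total p.1 q.1 with h | h
      · have := (key q hq.1).2.2 p hp.1 hne h
        omega
      · have := (key p hp.1).2.2 q hq.1 (Ne.symm hne) h
        omega
  have h3 := Finset.card_filter_add_card_filter_not (s := T) (fun p => c.1 ≤ p.1)
  rw [Int.card_Ico] at h1
  rw [Int.card_Ioc] at h2
  omega

/-- Upper bound on the degree. The set `C` consists of points such that no point of `G` lies
strictly above and to the left of them. Removing the outermost path turns each `c ∈ C` into the
corner `(c.1 + 1, c.2 - 1)` of the remaining region, and so it does with the two end points of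
that path; hence the correction by `2` in each step. -/
lemma natDegree_numer_le (μ : ℕ → ℤ) : ∀ (k : ℕ) (G : Finset (ℤ × ℤ)) (C : Set (ℤ × ℤ)),
    Region A B a e k G →
    (∀ i j, 1 ≤ i → i < j → j ≤ k → a i < a j) →
    (∀ i j, 1 ≤ i → i < j → j ≤ k → e j < e i) →
    (∀ c ∈ C, (∀ i, 1 ≤ i → i ≤ k → c.1 ≤ e i ∧ a i ≤ c.2) ∧ ∀ p ∈ G, WeaklySE p c) →
    (∀ i, 1 ≤ i → i ≤ k → (∃ c ∈ C, μ i = c.2 - c.1 - 2 * ((k : ℤ) - i)) ∨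
      ∃ j : ℕ, i ≤ j ∧ j ≤ k ∧
        (μ i = a j - 2 * ((j : ℤ) - i) ∨ μ i = A - e j - 2 * ((j : ℤ) - i))) →
    ((numer a e k G).natDegree : ℤ) ≤ ∑ i ∈ Finset.Icc 1 k, (e i - a i + μ i) := by
  intro k
  induction k with
  | zero =>
    intro G C _ _ _ _ _
    simp [numer]
  | succ k ih =>
    intro G C hG ham hem hC hμ
    obtain ⟨he1, he2⟩ := hG.ends (k + 1) (by omega) le_rfl
    have hb1 := hG.box _ he1
    have hb2 := hG.box _ he2
    simp only at hb1 hb2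
    rw [Finset.sum_Icc_succ_top (by omega)]
    have main : ∀ T ∈ turnSets (a (k + 1)) (e (k + 1)) G,
        ((Polynomial.X ^ T.card * numer a e k
          (G.filter (Below (a (k + 1)) (e (k + 1)) T))).natDegree : ℤ) ≤
        ∑ i ∈ Finset.Icc 1 k, (e i - a i + μ i) + (e (k + 1) - a (k + 1) + μ (k + 1)) := by
      intro T hT
      rw [turnSets, Finset.mem_filter, Finset.mem_powerset] at hT
      obtain ⟨hTG, hTT⟩ := hT
      -- The end points of the path bound its turns in the same way as the corners do.
      set C1 : Set (ℤ × ℤ) := insert (0, a (k + 1)) (insert (e (k + 1), A) C) with hC1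
      have hC1' : ∀ c ∈ C1, c.1 ≤ e (k + 1) ∧ a (k + 1) ≤ c.2 ∧ ∀ p ∈ G, WeaklySE p c := by
        intro c hc
        rcases hc with rfl | rfl | hc
        · exact ⟨hb2.1, le_rfl, fun p hp => Or.inl (hG.box p hp).1⟩
        · exact ⟨le_rfl, hb1.2.2.2, fun p hp => Or.inr (hG.box p hp).2.2.2⟩
        · have := hC c hc
          have h2 := this.1 (k + 1) (by omega) le_rfl
          exact ⟨h2.1, h2.2, this.2⟩
      have hIH := ih (G.filter (Below (a (k + 1)) (e (k + 1)) T))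
        ((fun c : ℤ × ℤ => (c.1 + 1, c.2 - 1)) '' C1) (hG.below ham hem T)
        (fun i j h1 h2 h3 => ham i j h1 h2 (by omega)) (fun i j h1 h2 h3 => hem i j h1 h2 (by omega))
        (by
          rintro _ ⟨c, hc, rfl⟩
          obtain ⟨h1, h2, h3⟩ := hC1' c hc
          constructor
          · intro i hi1 hi2
            have := ham i (k + 1) hi1 (by omega) le_rfl
            have := hem i (k + 1) hi1 (by omega) le_rfl
            simp only
            omega
          · intro p hp
            rw [Finset.mem_filter] at hp
            unfold WeaklySE
            simp only
            rcases hp.2 with ⟨t, ht, h5, h6⟩ | h | h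
            · rcases h3 t (hTG ht) with h | h <;> omega
            · omega
            · omega)
        (by
          intro i hi1 hi2
          rcases hμ i hi1 (by omega) with ⟨c, hc, h⟩ | ⟨j, hj1, hj2, h⟩
          · refine Or.inl ⟨(c.1 + 1, c.2 - 1), ⟨c, Or.inr (Or.inr hc), rfl⟩, ?_⟩
            push_cast at h
            simp only
            omega
          · rcases Nat.lt_or_ge k j with hjk | hjk
            · have hjk : j = k + 1 := by omega
              subst hjk
              push_cast at h
              rcases h with h | h
              · refine Or.inl ⟨(0 + 1, a (k + 1) - 1), ⟨_, Or.inl rfl, rfl⟩, ?_⟩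
                simp only
                omega
              · refine Or.inl ⟨(e (k + 1) + 1, A - 1), ⟨_, Or.inr (Or.inl rfl), rfl⟩, ?_⟩
                simp only
                omega
            · exact Or.inr ⟨j, hj1, hjk, h⟩)
      have hcard : (T.card : ℤ) ≤ e (k + 1) - a (k + 1) + μ (k + 1) := by
        have : ∃ c ∈ C1, μ (k + 1) = c.2 - c.1 := by
          rcases hμ (k + 1) (by omega) le_rfl with ⟨c, hc, h⟩ | ⟨j, hj1, hj2, h⟩
          · exact ⟨c, Or.inr (Or.inr hc), by omega⟩
          · have hjk : j = k + 1 := by omega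
            subst hjk
            rcases h with h | h
            · exact ⟨_, Or.inl rfl, by simp only; omega⟩
            · exact ⟨_, Or.inr (Or.inl rfl), by simp only; omega⟩
        obtain ⟨c, hc, h⟩ := this
        obtain ⟨h1, h2, h3⟩ := hC1' c hc
        rw [h]
        exact card_turns_le hTT h1 h2 fun p hp => h3 p (hTG hp)
      have h5 := Polynomial.natDegree_mul_le (p := (Polynomial.X : Polynomial ℕ) ^ T.card)
        (q := numer a e k (G.filter (Below (a (k + 1)) (e (k + 1)) T)))
      rw [Polynomial.natDegree_X_pow] at h5
      omega
    -- The empty turn set shows that the right-hand side is nonnegative.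
    obtain ⟨T0, hT0⟩ : (turnSets (a (k + 1)) (e (k + 1)) G).Nonempty :=
      ⟨∅, by simp [turnSets, turns]⟩
    have hnn := main T0 hT0
    rw [numer]
    have : (∑ T ∈ turnSets (a (k + 1)) (e (k + 1)) G, Polynomial.X ^ T.card *
        numer a e k (G.filter (Below (a (k + 1)) (e (k + 1)) T))).natDegree ≤
        (∑ i ∈ Finset.Icc 1 k, (e i - a i + μ i) + (e (k + 1) - a (k + 1) + μ (k + 1))).toNat := by
      apply Polynomial.natDegree_sum_le_of_forall_le
      intro T hT
      have := main T hT
      omega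
    omega

/-- The points `(x, y)` with `x < e` and `a < y` on the diagonal `y = x + μ + 1`. -/
noncomputable def diagSet (a e μ : ℤ) : Finset (ℤ × ℤ) :=
  (Finset.Ioc a (e + μ)).image fun y => (y - μ - 1, y)

lemma mem_diagSet {a e μ : ℤ} {p : ℤ × ℤ} :
    p ∈ diagSet a e μ ↔ a < p.2 ∧ p.1 < e ∧ p.2 = p.1 + μ + 1 := by
  simp only [diagSet, Finset.mem_image, Finset.mem_Ioc]
  constructor
  · rintro ⟨y, h, rfl⟩
    simp only
    omega
  · rintro h
    exact ⟨p.2, by omega, Prod.ext (by simp only; omega) rfl⟩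

lemma card_diagSet {a e μ : ℤ} : (diagSet a e μ).card = (e - a + μ).toNat := by
  rw [diagSet, Finset.card_image_of_injective _ (fun y z h => (Prod.ext_iff.1 h).2), Int.card_Ioc]
  congr 1
  ring

/-- If the diagonal sets lie in `G` and consecutive ones are at least two diagonals apart, they
are the turn sets of a non-crossing family of paths, which contributes to the numerator. -/
lemma coeff_numer_pos (μ : ℕ → ℤ) : ∀ (k : ℕ) (G : Finset (ℤ × ℤ)),
    (∀ i, 1 ≤ i → i ≤ k → diagSet (a i) (e i) (μ i) ⊆ G) →
    (∀ i j, 1 ≤ i → i < j → j ≤ k → μ i + 2 ≤ μ j) →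
    0 < (numer a e k G).coeff (∑ i ∈ Finset.Icc 1 k, (e i - a i + μ i).toNat) := by
  intro k
  induction k with
  | zero =>
    intro G _ _
    simp [numer]
  | succ k ih =>
    intro G hG hμ
    set T := diagSet (a (k + 1)) (e (k + 1)) (μ (k + 1)) with hT
    have hTm : T ∈ turnSets (a (k + 1)) (e (k + 1)) G := by
      rw [turnSets, Finset.mem_filter, Finset.mem_powerset]
      refine ⟨hG (k + 1) (by omega) le_rfl, ?_⟩
      ext p
      rw [mem_turns]
      refine ⟨fun h => h.1, fun h => ⟨h, ?_⟩⟩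
      have h1 := mem_diagSet.1 h
      refine ⟨h1.2.1, h1.1, ?_⟩
      intro q hq hne hle
      have h2 := mem_diagSet.1 hq
      have : q.1 ≠ p.1 := fun h3 => hne (Prod.ext h3 (by omega))
      omega
    have hIH := ih (G.filter (Below (a (k + 1)) (e (k + 1)) T))
      (by
        intro i hi1 hi2 p hp
        rw [Finset.mem_filter]
        refine ⟨hG i hi1 (by omega) hp, ?_⟩
        rw [mem_diagSet] at hp
        have := hμ i (k + 1) hi1 (by omega) le_rfl
        by_cases h1 : p.2 < a (k + 1)
        · exact Or.inr (Or.inl h1)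
        by_cases h2 : e (k + 1) < p.1
        · exact Or.inr (Or.inr h2)
        refine Or.inl ⟨(p.1 - 1, p.1 + μ (k + 1)), mem_diagSet.2 ?_, ?_⟩
        · simp only
          omega
        · simp only
          omega)
      (fun i j h1 h2 h3 => hμ i j h1 h2 (by omega))
    rw [numer, Polynomial.finsetSum_coeff]
    refine lt_of_lt_of_le hIH ?_
    have h := Finset.single_le_sum (f := fun T' => (Polynomial.X ^ T'.card *
      numer a e k (G.filter (Below (a (k + 1)) (e (k + 1)) T'))).coeff
        (∑ i ∈ Finset.Icc 1 (k + 1), (e i - a i + μ i).toNat))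
      (fun _ _ => Nat.zero_le _) hTm
    refine le_trans (le_of_eq ?_) h
    rw [Finset.sum_Icc_succ_top (by omega), hT, card_diagSet, Polynomial.coeff_X_pow_mul]


/-! ### Labellings of good sets and chains in the other sets -/

/-- A good set splits into `k` classes, the class `i` consisting of points on a path from
`(0, a i)` to `(e i, A)`, where the label of a point is the index of the path that removes it. -/
lemma exists_label : ∀ (k : ℕ) (S : Finset (ℤ × ℤ)), (∀ p ∈ S, 0 ≤ p.1 ∧ p.2 ≤ A) →
    Good a e k S → ∃ lab : ℤ × ℤ → ℕ, ∀ p ∈ S, (1 ≤ lab p ∧ lab p ≤ k) ∧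
      (a (lab p) ≤ p.2 ∧ p.1 ≤ e (lab p)) ∧
      ∀ q ∈ S, lab p = lab q → (p.1 ≤ q.1 ∧ p.2 ≤ q.2) ∨ (q.1 ≤ p.1 ∧ q.2 ≤ p.2) := by
  intro k
  induction k with
  | zero =>
    intro S _ h
    rw [Good] at h
    subst h
    exact ⟨fun _ => 0, by simp⟩
  | succ k ih =>
    intro S hbox h
    rw [Good] at h
    set T := turns (a (k + 1)) (e (k + 1)) S with hT
    obtain ⟨lab, hlab⟩ := ih _ (fun p hp => hbox p (Finset.mem_filter.1 hp).1) h
    refine ⟨fun p => if Below (a (k + 1)) (e (k + 1)) T p then lab p else k + 1, ?_⟩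
    intro p hp
    by_cases hb : Below (a (k + 1)) (e (k + 1)) T p
    · obtain ⟨h1, h2, h3⟩ := hlab p (Finset.mem_filter.2 ⟨hp, hb⟩)
      simp only [hb, if_true]
      refine ⟨⟨h1.1, by omega⟩, h2, ?_⟩
      intro q hq hpq
      by_cases hbq : Below (a (k + 1)) (e (k + 1)) T q
      · rw [if_pos hbq] at hpq
        exact h3 q (Finset.mem_filter.2 ⟨hq, hbq⟩) hpq
      · rw [if_neg hbq] at hpq
        omega
    · have hpP := path_or_below hbox hp hb
      have hpP' := mem_pathOf.1 hpP
      simp only [hb, if_false]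
      refine ⟨⟨by omega, le_rfl⟩, ⟨hpP'.2.1.1, hpP'.1.2⟩, ?_⟩
      intro q hq hpq
      by_cases hbq : Below (a (k + 1)) (e (k + 1)) T q
      · rw [if_pos hbq] at hpq
        have := (hlab q (Finset.mem_filter.2 ⟨hq, hbq⟩)).1
        omega
      · have hqP := path_or_below hbox hq hbq
        rcases lt_trichotomy p.1 q.1 with h4 | h4 | h4
        · exact Or.inl ⟨h4.le, path_chain hpP hqP h4⟩
        · rcases le_total p.2 q.2 with h5 | h5
          · exact Or.inl ⟨h4.le, h5⟩
          · exact Or.inr ⟨h4.ge, h5⟩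
        · exact Or.inr ⟨h4.le, path_chain hqP hpP h4⟩

/-- A set that is not good contains `t` points, each strictly to the right of and strictly below
the previous one, all of them under the row `a t` or all beyond the column `e t` if `t ≤ k`.
Such a chain is the main diagonal of one of the minors generating the ladder ideal. -/
lemma exists_bad_chain : ∀ (k : ℕ) (S : Finset (ℤ × ℤ)), ¬ Good a e k S →
    ∃ t, 1 ≤ t ∧ t ≤ k + 1 ∧ ∃ c : Fin t → ℤ × ℤ, (∀ i, c i ∈ S) ∧
      (∀ i j, i < j → (c i).1 < (c j).1 ∧ (c j).2 < (c i).2) ∧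
      (t ≤ k → (∀ i, (c i).2 < a t) ∨ (∀ i, e t < (c i).1)) := by
  intro k
  induction k with
  | zero =>
    intro S h
    rw [Good] at h
    obtain ⟨p, hp⟩ := Finset.nonempty_of_ne_empty h
    exact ⟨1, le_rfl, le_rfl, fun _ => p, fun _ => hp, fun i j h => by omega, by omega⟩
  | succ k ih =>
    intro S h
    rw [Good] at h
    obtain ⟨t, ht1, ht2, c, hcS, hc, hcon⟩ := ih _ h
    by_cases htk : t ≤ k
    · exact ⟨t, ht1, by omega, c, fun i => (Finset.mem_filter.1 (hcS i)).1, hc,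
        fun _ => hcon htk⟩
    obtain rfl : t = k + 1 := by omega
    have h0 : ∀ i, i = 0 ∨ ((c 0).1 < (c i).1 ∧ (c i).2 < (c 0).2) := fun i => by
      rcases Fin.eq_zero_or_eq_succ i with h | ⟨j, rfl⟩
      · exact Or.inl h
      · exact Or.inr (hc 0 _ (Fin.succ_pos j))
    rcases (Finset.mem_filter.1 (hcS 0)).2 with ⟨p, hp, h1, h2⟩ | h1 | h1
    -- The first point of the chain lies under a turn of the path, which prolongs the chain.
    · refine ⟨k + 1 + 1, by omega, le_rfl, Fin.cons p c, ?_, ?_, by omega⟩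
      · intro i
        refine Fin.cases ?_ (fun j => ?_) i
        · exact turns_subset hp
        · exact (Finset.mem_filter.1 (hcS j)).1
      · intro i j
        refine Fin.cases ?_ (fun i => ?_) i <;> refine Fin.cases ?_ (fun j => ?_) j
        · intro h
          exact absurd h (lt_irrefl _)
        · intro _
          simp only [Fin.cons_zero, Fin.cons_succ]
          rcases h0 j with rfl | h
          · exact ⟨h1, h2⟩
          · exact ⟨h1.trans h.1, h.2.trans h2⟩
        · intro h
          exact absurd h (Fin.not_lt_zero _)
        · intro h
          simp only [Fin.cons_succ]
          exact hc i j (Fin.succ_lt_succ_iff.1 h)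
    · refine ⟨k + 1, by omega, by omega, c, fun i => (Finset.mem_filter.1 (hcS i)).1, hc,
        fun _ => Or.inl fun i => ?_⟩
      rcases h0 i with rfl | h <;> omega
    · refine ⟨k + 1, by omega, by omega, c, fun i => (Finset.mem_filter.1 (hcS i)).1, hc,
        fun _ => Or.inr fun i => ?_⟩
      rcases h0 i with rfl | h <;> omega


/-! ### Hilbert series from a monomial basis -/

/-- Rearrangement inequality for labelled pairs `(label, row, column)`. If equally labelled
entries of `M` have their rows and columns oppositely ordered, then among all multisets with the
same labelled rows and the same labelled columns, `M` alone minimises the sum of the products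
`row * column`. -/
lemma rearrange (N : ℕ) : ∀ M M' : Multiset (ℕ × ℕ × ℕ), Multiset.card M = N →
    (∀ p ∈ M, ∀ q ∈ M, p.1 = q.1 →
      (p.2.1 ≤ q.2.1 ∧ q.2.2 ≤ p.2.2) ∨ (q.2.1 ≤ p.2.1 ∧ p.2.2 ≤ q.2.2)) →
    M.map (fun p => (p.1, p.2.1)) = M'.map (fun p => (p.1, p.2.1)) →
    M.map (fun p => (p.1, p.2.2)) = M'.map (fun p => (p.1, p.2.2)) →
    M = M' ∨ (M.map fun p => p.2.1 * p.2.2).sum < (M'.map fun p => p.2.1 * p.2.2).sum := by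
  induction N with
  | zero =>
    intro M M' hM _ h1 _
    rw [Multiset.card_eq_zero] at hM
    subst hM
    left
    symm
    simpa using h1.symm
  | succ N ih =>
    intro M M' hM hanti h1 h2
    obtain ⟨p0, hp0⟩ := Multiset.card_pos_iff_exists_mem.1 (by omega : 0 < Multiset.card M)
    -- The entry `p` has the largest row and the smallest column in its label class.
    obtain ⟨p, hp, hmax⟩ := Finset.exists_max_image (M.toFinset.filter fun q => q.1 = p0.1)
      (fun q => (q.2.1 : ℤ) - q.2.2) ⟨p0, by simpa using hp0⟩
    simp only [Finset.mem_filter, Multiset.mem_toFinset] at hp hmax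
    have hext : ∀ q ∈ M, q.1 = p.1 → q.2.1 ≤ p.2.1 ∧ p.2.2 ≤ q.2.2 := by
      intro q hq hqp
      have h3 := hmax q ⟨hq, by omega⟩
      rcases hanti p hp.1 q hq hqp.symm with h | h <;> omega
    obtain ⟨M1, rfl⟩ := Multiset.exists_cons_of_mem hp.1
    have hM1 : Multiset.card M1 = N := by simpa using hM
    have hanti1 : ∀ p ∈ M1, ∀ q ∈ M1, p.1 = q.1 →
        (p.2.1 ≤ q.2.1 ∧ q.2.2 ≤ p.2.2) ∨ (q.2.1 ≤ p.2.1 ∧ p.2.2 ≤ q.2.2) :=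
      fun p hp q hq => hanti p (Multiset.mem_cons_of_mem hp) q (Multiset.mem_cons_of_mem hq)
    by_cases hpM' : p ∈ M'
    · obtain ⟨M1', rfl⟩ := Multiset.exists_cons_of_mem hpM'
      simp only [Multiset.map_cons, Multiset.cons_inj_right, Multiset.sum_cons] at h1 h2 ⊢
      rcases ih M1 M1' hM1 hanti1 h1 h2 with h | h
      · exact Or.inl h
      · exact Or.inr (by omega)
    · right
      obtain ⟨q, hq, hq1⟩ : ∃ q ∈ M', (q.1, q.2.1) = (p.1, p.2.1) := by
        have : (p.1, p.2.1) ∈ M'.map (fun p => (p.1, p.2.1)) := h1 ▸ Multiset.mem_map_of_mem _ hp.1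
        simpa using this
      obtain ⟨q', hq', hq1'⟩ : ∃ q ∈ M', (q.1, q.2.2) = (p.1, p.2.2) := by
        have : (p.1, p.2.2) ∈ M'.map (fun p => (p.1, p.2.2)) := h2 ▸ Multiset.mem_map_of_mem _ hp.1
        simpa using this
      obtain ⟨x, i, j⟩ := p
      obtain ⟨x1, i1, j1⟩ := q
      obtain ⟨x2, i2, j2⟩ := q'
      simp only [Prod.mk.injEq] at hq1 hq1'
      obtain ⟨rfl, rfl⟩ := hq1
      obtain ⟨rfl, rfl⟩ := hq1'
      obtain ⟨R1, rfl⟩ := Multiset.exists_cons_of_mem hq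
      have hne : (x2, i2, j2) ≠ (x2, i1, j1) := by
        intro h
        exact hpM' (by
          simp only [Prod.mk.injEq, true_and] at h
          obtain ⟨rfl, rfl⟩ := h
          simp)
      have hq'' : (x2, i2, j2) ∈ R1 := by
        rcases Multiset.mem_cons.1 hq' with h | h
        · exact absurd h hne
        · exact h
      obtain ⟨R, rfl⟩ := Multiset.exists_cons_of_mem hq''
      have hb : i2 ≤ i1 ∧ j2 ≤ j1 := by
        have e1 : (x2, i2) ∈ ((x2, i1, j2) ::ₘ M1).map (fun p => (p.1, p.2.1)) := by
          rw [h1]; simp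
        have e2 : (x2, j1) ∈ ((x2, i1, j2) ::ₘ M1).map (fun p => (p.1, p.2.2)) := by
          rw [h2]; simp
        obtain ⟨s, hs, hs'⟩ := Multiset.mem_map.1 e1
        obtain ⟨s2, hs2, hs2'⟩ := Multiset.mem_map.1 e2
        simp only [Prod.mk.injEq] at hs' hs2'
        have f1 := (hext s hs hs'.1).1
        have f2 := (hext s2 hs2 hs2'.1).2
        simp only at f1 f2
        omega
      have hi : i2 < i1 := lt_of_le_of_ne hb.1 (by
        rintro rfl
        exact hpM' (by simp))
      have hj : j2 < j1 := lt_of_le_of_ne hb.2 (by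
        rintro rfl
        exact hpM' (by simp))
      -- Swapping columns in `M'` produces the entry `p` and strictly decreases the sum.
      have hIH := ih M1 ((x2, i2, j1) ::ₘ R) hM1 hanti1 (by
          simp only [Multiset.map_cons, Multiset.cons_inj_right] at h1 ⊢
          exact h1) (by
          simp only [Multiset.map_cons] at h2 ⊢
          rw [Multiset.cons_swap, Multiset.cons_inj_right] at h2
          exact h2)
      have hle : (M1.map fun p => p.2.1 * p.2.2).sum ≤
          (((x2, i2, j1) ::ₘ R).map fun p => p.2.1 * p.2.2).sum := by
        rcases hIH with h | h
        · rw [h]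
        · exact h.le
      simp only [Multiset.map_cons, Multiset.sum_cons] at hle ⊢
      have : i1 * j2 + i2 * j1 < i1 * j1 + i2 * j2 := by nlinarith
      omega

section Abstract
variable {K : Type*} [Field K] {σ : Type*}

/-- If each monomial that is not good is congruent modulo `I` to a combination of monomials of
the same degree and smaller weight, then the good monomials span the quotient. -/
lemma span_good (I : Ideal (MvPolynomial σ K)) (good : (σ →₀ ℕ) → Prop) (wt : (σ →₀ ℕ) → ℕ)
    (hred : ∀ m, ¬ good m → ∃ g ∈ Submodule.span K
      {f : MvPolynomial σ K | ∃ m' : σ →₀ ℕ, m'.degree = m.degree ∧ wt m' < wt m ∧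
        f = MvPolynomial.monomial m' 1}, MvPolynomial.monomial m 1 - g ∈ I) (ℓ : ℕ) :
    Submodule.map (Ideal.Quotient.mkₐ K I).toLinearMap (MvPolynomial.homogeneousSubmodule σ K ℓ) =
      Submodule.span K (Set.range fun m : {m : σ →₀ ℕ // m.degree = ℓ ∧ good m} =>
        (Ideal.Quotient.mkₐ K I) (MvPolynomial.monomial m.1 1)) := by
  apply le_antisymm
  · have key : ∀ N, ∀ m : σ →₀ ℕ, m.degree = ℓ → wt m = N →
        (Ideal.Quotient.mkₐ K I) (MvPolynomial.monomial m 1) ∈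
        Submodule.span K (Set.range fun m : {m : σ →₀ ℕ // m.degree = ℓ ∧ good m} =>
        (Ideal.Quotient.mkₐ K I) (MvPolynomial.monomial m.1 1)) := by
      intro N
      induction N using Nat.strong_induction_on with
      | _ N ih =>
        intro m hm hN
        by_cases hg : good m
        · exact Submodule.subset_span ⟨⟨m, hm, hg⟩, rfl⟩
        · obtain ⟨g, hgs, hgI⟩ := hred m hg
          have h1 : (Ideal.Quotient.mkₐ K I) (MvPolynomial.monomial m 1) =
              (Ideal.Quotient.mkₐ K I) g := by
            simp only [Ideal.Quotient.mkₐ_eq_mk]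
            exact Ideal.Quotient.eq.2 hgI
          rw [h1]
          have h2 : Submodule.span K
              {f : MvPolynomial σ K | ∃ m' : σ →₀ ℕ, m'.degree = m.degree ∧ wt m' < wt m ∧
                f = MvPolynomial.monomial m' 1} ≤
              Submodule.comap (Ideal.Quotient.mkₐ K I).toLinearMap
                (Submodule.span K (Set.range fun m : {m : σ →₀ ℕ // m.degree = ℓ ∧ good m} =>
                  (Ideal.Quotient.mkₐ K I) (MvPolynomial.monomial m.1 1))) := by
            rw [Submodule.span_le]
            rintro _ ⟨m', hm'1, hm'2, rfl⟩
            exact ih (wt m') (by omega) m' (by omega) rfl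
          exact h2 hgs
    rw [MvPolynomial.homogeneousSubmodule_eq_finsupp_supported, Submodule.map_le_iff_le_comap]
    intro f hf
    rw [← MvPolynomial.support_sum_monomial_coeff f]
    refine Submodule.sum_mem _ fun m hm => ?_
    have hmd : m.degree = ℓ := hf hm
    rw [Submodule.mem_comap, ← mul_one (MvPolynomial.coeff m f), ← smul_eq_mul,
      ← MvPolynomial.smul_monomial, map_smul]
    exact Submodule.smul_mem _ _ (key _ m hmd rfl)
  · rw [Submodule.span_le]
    rintro _ ⟨⟨m, hm, hg⟩, rfl⟩
    refine ⟨MvPolynomial.monomial m 1, ?_, rfl⟩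
    exact MvPolynomial.isHomogeneous_monomial _ hm

/-- The good monomials are independent modulo `I` if each of them has a dual functional, vanishing
on `I`, which is nonzero only on that monomial and on monomials of larger weight. -/
lemma indep_good (I : Ideal (MvPolynomial σ K)) (good : (σ →₀ ℕ) → Prop) (wt : (σ →₀ ℕ) → ℕ)
    (ℓ : ℕ) (hfun : ∀ m : σ →₀ ℕ, m.degree = ℓ → good m →
      ∃ F : MvPolynomial σ K →ₗ[K] K, (∀ f ∈ I, F f = 0) ∧ F (MvPolynomial.monomial m 1) = 1 ∧
        ∀ m' : σ →₀ ℕ, m'.degree = ℓ → m' ≠ m → F (MvPolynomial.monomial m' 1) ≠ 0 →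
          wt m < wt m') :
    LinearIndependent K fun m : {m : σ →₀ ℕ // m.degree = ℓ ∧ good m} =>
      (Ideal.Quotient.mkₐ K I) (MvPolynomial.monomial m.1 1) := by
  rw [linearIndependent_iff']
  intro s g hsum
  by_contra hcon
  push Not at hcon
  obtain ⟨i0, hi0, hgi0⟩ := hcon
  -- Apply the functional of a monomial of maximal weight among those that occur.
  obtain ⟨m, hm, hmax⟩ := Finset.exists_max_image (s.filter fun i => g i ≠ 0)
    (fun m => wt m.1) ⟨i0, by simp [hi0, hgi0]⟩
  rw [Finset.mem_filter] at hm
  obtain ⟨F, hFI, hF1, hF⟩ := hfun m.1 m.2.1 m.2.2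
  have hmem : ∑ i ∈ s, g i • MvPolynomial.monomial i.1 (1 : K) ∈ I := by
    rw [← Ideal.Quotient.eq_zero_iff_mem, ← Ideal.Quotient.mkₐ_eq_mk K, map_sum]
    simpa only [map_smul] using hsum
  have h0 := hFI _ hmem
  rw [map_sum, Finset.sum_eq_single m] at h0
  · rw [map_smul, hF1, smul_eq_mul, mul_one] at h0
    exact hm.2 h0
  · intro i hi him
    rw [map_smul, smul_eq_mul]
    by_contra hne
    have h1 := hF i.1 i.2.1 (fun h => him (Subtype.ext h)) (right_ne_zero_of_mul hne)
    have h2 := hmax i (Finset.mem_filter.2 ⟨hi, left_ne_zero_of_mul hne⟩)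
    omega
  · exact fun h => absurd hm.1 h

lemma quotDim_eq [Fintype σ] (I : Ideal (MvPolynomial σ K)) (good : (σ →₀ ℕ) → Prop)
    (wt : (σ →₀ ℕ) → ℕ)
    (hred : ∀ m, ¬ good m → ∃ g ∈ Submodule.span K
      {f : MvPolynomial σ K | ∃ m' : σ →₀ ℕ, m'.degree = m.degree ∧ wt m' < wt m ∧
        f = MvPolynomial.monomial m' 1}, MvPolynomial.monomial m 1 - g ∈ I) (ℓ : ℕ)
    (hfun : ∀ m : σ →₀ ℕ, m.degree = ℓ → good m →
      ∃ F : MvPolynomial σ K →ₗ[K] K, (∀ f ∈ I, F f = 0) ∧ F (MvPolynomial.monomial m 1) = 1 ∧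
        ∀ m' : σ →₀ ℕ, m'.degree = ℓ → m' ≠ m → F (MvPolynomial.monomial m' 1) ≠ 0 →
          wt m < wt m') :
    quotDim K I ℓ = Nat.card {m : σ →₀ ℕ // m.degree = ℓ ∧ good m} := by
  have hiff : ∀ m : σ →₀ ℕ, m ∈ (Finset.finsuppAntidiag Finset.univ ℓ).filter good ↔
      m.degree = ℓ ∧ good m := by
    intro m
    rw [Finset.mem_filter, Finset.mem_finsuppAntidiag, Finsupp.degree_eq_sum]
    simp
  let _ : Fintype {m : σ →₀ ℕ // m.degree = ℓ ∧ good m} := Fintype.subtype _ hiff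
  rw [quotDim, span_good I good wt hred, finrank_span_eq_card (indep_good I good wt ℓ hfun),
    Nat.card_eq_fintype_card]

/-- With `V = 1 / (1 - X)`, the monomials of support `S` have generating function
`(X * V) ^ |S|`. -/
lemma card_support_eq [Fintype σ] (S : Finset σ) (V : PowerSeries ℤ)
    (hV : V = PowerSeries.mk fun _ => 1) (ℓ : ℕ) :
    ((((Finset.finsuppAntidiag Finset.univ ℓ).filter fun m : σ →₀ ℕ => m.support = S).card : ℕ) : ℤ)
      = PowerSeries.coeff ℓ ((PowerSeries.X * V) ^ S.card) := by
  have hXV : ∀ n, PowerSeries.coeff n (PowerSeries.X * V) = if n = 0 then (0 : ℤ) else 1 := by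
    intro n
    cases n with
    | zero => simp
    | succ n => rw [PowerSeries.coeff_succ_X_mul, hV, PowerSeries.coeff_mk]; simp
  rw [← Finset.prod_const, PowerSeries.coeff_prod]
  simp only [hXV]
  have : ∀ m : σ →₀ ℕ, (∏ i ∈ S, if m i = 0 then (0 : ℤ) else 1) =
      if S ⊆ m.support then 1 else 0 := by
    intro m
    by_cases h : S ⊆ m.support
    · rw [if_pos h]
      exact Finset.prod_eq_one fun i hi => if_neg (Finsupp.mem_support_iff.1 (h hi))
    · rw [if_neg h]
      obtain ⟨i, hi, hi2⟩ := Finset.not_subset.1 h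
      exact Finset.prod_eq_zero hi (if_pos (Finsupp.notMem_support_iff.1 hi2))
  simp only [this]
  rw [Finset.sum_ite, Finset.sum_const_zero, add_zero, Finset.sum_const, nsmul_eq_mul, mul_one]
  congr 2
  ext m
  simp only [Finset.mem_filter, Finset.mem_finsuppAntidiag, Finset.subset_univ, and_true]
  constructor
  · rintro ⟨h1, rfl⟩
    refine ⟨⟨?_, subset_rfl⟩, subset_rfl⟩
    rw [← h1]
    exact Finset.sum_subset (Finset.subset_univ _) fun i _ hi => Finsupp.notMem_support_iff.1 hi
  · rintro ⟨⟨h1, h2⟩, h3⟩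
    refine ⟨?_, h2.antisymm h3⟩
    rw [← h1]
    exact (Finset.sum_subset (Finset.subset_univ _)
      fun i _ hi => Finsupp.notMem_support_iff.1 fun h => hi (h2 h)).symm

/-- The Hilbert series when `I` has a monomial basis cut out by a condition on supports. -/
lemma hilbert_eq [Fintype σ] (I : Ideal (MvPolynomial σ K)) (good : Finset σ → Prop)
    (V : PowerSeries ℤ) (hV : V = PowerSeries.mk fun _ => 1)
    (h : ∀ ℓ, quotDim K I ℓ = Nat.card {m : σ →₀ ℕ // m.degree = ℓ ∧ good m.support}) :
    hilbertSeries K I = ∑ S ∈ Finset.univ.filter good, (PowerSeries.X * V) ^ S.card := by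
  ext ℓ
  have hcard : Nat.card {m : σ →₀ ℕ // m.degree = ℓ ∧ good m.support} =
      ((Finset.finsuppAntidiag Finset.univ ℓ).filter fun m : σ →₀ ℕ => good m.support).card := by
    refine Nat.subtype_card _ fun m => ?_
    rw [Finset.mem_filter, Finset.mem_finsuppAntidiag, Finsupp.degree_eq_sum]
    simp
  rw [hilbertSeries, PowerSeries.coeff_mk, h, hcard, map_sum]
  simp only [← card_support_eq _ V hV]
  rw [← Nat.cast_sum, Nat.cast_inj]
  rw [Finset.card_eq_sum_card_fiberwise (f := fun m : σ →₀ ℕ => m.support)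
    (t := Finset.univ.filter good)]
  · refine Finset.sum_congr rfl fun S hS => ?_
    congr 1
    ext m
    simp only [Finset.mem_filter, Finset.mem_univ, true_and] at hS ⊢
    constructor
    · exact fun h => ⟨h.1.1, h.2⟩
    · exact fun h => ⟨⟨h.1, h.2 ▸ hS⟩, h.2⟩
  · intro m hm
    simp only [Finset.coe_filter, Set.mem_ofPred_eq, Finset.mem_univ, true_and] at hm ⊢
    exact hm.2

/-- A monomial of degree `ℓ` is a product of `ℓ` variables, listed with repetition. -/
lemma exists_listing : ∀ (ℓ : ℕ) (m : σ →₀ ℕ), m.degree = ℓ →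
    ∃ c : Fin ℓ → σ, ∑ i, Finsupp.single (c i) 1 = m := by
  intro ℓ
  induction ℓ with
  | zero =>
    intro m hm
    rw [Finsupp.degree_eq_zero_iff] at hm
    exact ⟨Fin.elim0, by simp [hm]⟩
  | succ ℓ ih =>
    intro m hm
    have hne : m ≠ 0 := by
      rintro rfl
      simp at hm
    obtain ⟨q, hq⟩ := Finsupp.ne_iff.1 hne
    have hle : Finsupp.single q 1 ≤ m := by
      rw [Finsupp.single_le_iff]
      exact Nat.one_le_iff_ne_zero.2 hq
    have hadd := tsub_add_cancel_of_le hle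
    obtain ⟨c, hc⟩ := ih (m - Finsupp.single q 1) (by
      have := congrArg Finsupp.degree hadd
      rw [map_add, Finsupp.degree_single, hm] at this
      omega)
    refine ⟨Fin.cons q c, ?_⟩
    rw [Fin.sum_univ_succ]
    simp only [Fin.cons_zero, Fin.cons_succ]
    rw [hc, add_comm, hadd]

end Abstract


/-! ### Reduction by minors and the labelling homomorphism -/

section Algebra
variable {K : Type*} [Field K] {σ : Type*}

/-- The weight of a monomial: the sum of `row * column` over its variables, with multiplicity. -/
noncomputable def wt (row col : σ → ℕ) : (σ →₀ ℕ) →ₗ[ℕ] ℕ :=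
  Finsupp.linearCombination ℕ fun q => row q * col q

lemma wt_single (row col : σ → ℕ) (q : σ) : wt row col (Finsupp.single q 1) = row q * col q := by
  simp [wt]

/-- A monomial divisible by the main diagonal of a minor is congruent, modulo this minor, to a
combination of monomials of smaller weight: by the rearrangement inequality the main diagonal has
the strictly largest weight among the terms of the determinant. -/
lemma exists_reduction (row col : σ → ℕ) {t : ℕ} (f : Fin t → Fin t → σ) (ρ κ : Fin t → ℕ)
    (hρ : StrictMono ρ) (hκ : StrictMono κ) (hrow : ∀ k l, row (f k l) = ρ k)
    (hcol : ∀ k l, col (f k l) = κ l) (m : σ →₀ ℕ) (hm : ∀ i, f i i ∈ m.support) :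
    ∃ g ∈ Submodule.span K
      {p : MvPolynomial σ K | ∃ m' : σ →₀ ℕ, m'.degree = m.degree ∧
        wt row col m' < wt row col m ∧ p = MvPolynomial.monomial m' 1},
      ∃ h, MvPolynomial.monomial m 1 - g =
        h * Matrix.det (Matrix.of fun k l => (MvPolynomial.X (f k l) : MvPolynomial σ K)) := by
  set D : Equiv.Perm (Fin t) → (σ →₀ ℕ) := fun π => ∑ i, Finsupp.single (f (π i) i) 1 with hD
  have hle : D 1 ≤ m := by
    intro q
    have hq : D 1 q = (Finset.univ.filter fun i => f i i = q).card := by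
      simp only [hD, Finsupp.finsetSum_apply, Finsupp.single_apply, Equiv.Perm.coe_one, id_eq]
      rw [Finset.card_filter]
    rw [hq]
    rcases Finset.eq_empty_or_nonempty (Finset.univ.filter fun i => f i i = q) with h | ⟨i, hi⟩
    · rw [h]; simp
    · have h1 : (Finset.univ.filter fun i => f i i = q).card ≤ 1 := by
        rw [Finset.card_le_one]
        intro x hx y hy
        simp only [Finset.mem_filter, Finset.mem_univ, true_and] at hx hy
        apply hρ.injective
        rw [← hrow x x, ← hrow y y, hx, hy]
      have h2 := hm i
      rw [(Finset.mem_filter.1 hi).2, Finsupp.mem_support_iff] at h2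
      omega
  have hadd : m - D 1 + D 1 = m := tsub_add_cancel_of_le hle
  have hdet : MvPolynomial.monomial (m - D 1) 1 *
      Matrix.det (Matrix.of fun k l => (MvPolynomial.X (f k l) : MvPolynomial σ K)) =
      ∑ π : Equiv.Perm (Fin t), ((Equiv.Perm.sign π : ℤ) : MvPolynomial σ K) *
        MvPolynomial.monomial (m - D 1 + D π) 1 := by
    rw [Matrix.det_apply', Finset.mul_sum]
    refine Finset.sum_congr rfl fun π _ => ?_
    have : (∏ i, Matrix.of (fun k l => (MvPolynomial.X (f k l) : MvPolynomial σ K)) (π i) i) =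
        MvPolynomial.monomial (D π) 1 := by
      rw [hD, MvPolynomial.monomial_sum_one]
      rfl
    rw [this, mul_left_comm, MvPolynomial.monomial_mul, one_mul]
  refine ⟨-∑ π ∈ Finset.univ.erase (1 : Equiv.Perm (Fin t)),
    ((Equiv.Perm.sign π : ℤ) : MvPolynomial σ K) * MvPolynomial.monomial (m - D 1 + D π) 1, ?_,
    MvPolynomial.monomial (m - D 1) 1, ?_⟩
  · refine Submodule.neg_mem _ (Submodule.sum_mem _ fun π hπ => ?_)
    rw [← zsmul_eq_mul]
    refine Submodule.smul_of_tower_mem _ _ (Submodule.subset_span ⟨_, ?_, ?_, rfl⟩)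
    · conv_rhs => rw [← hadd]
      simp [hD]
    · conv_rhs => rw [← hadd]
      rw [map_add, map_add]
      simp only [hD, map_sum, wt_single, hrow, hcol, Equiv.Perm.coe_one, id_eq]
      have hmono : Monovary ρ κ := hρ.monotone.monovary hκ.monotone
      rw [add_lt_add_iff_left, hmono.sum_comp_perm_mul_lt_sum_mul_iff]
      intro hcon
      apply Finset.ne_of_mem_erase hπ
      have hmon : StrictMono π := by
        intro i j hij
        by_contra hn
        have h1 : π j < π i := lt_of_le_of_ne (not_lt.1 hn) (by simpa using hij.ne')
        exact absurd (hcon (hκ hij)) (not_le.2 (hρ h1))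
      exact Equiv.ext fun i => by
        have := Subsingleton.elim (hmon.orderIsoOfSurjective π π.surjective) (OrderIso.refl _)
        simpa using congrArg (fun e => e i) this
  · rw [hdet, ← Finset.add_sum_erase _ _ (Finset.mem_univ (1 : Equiv.Perm (Fin t)))]
    simp [hadd]

/-- Indices of the auxiliary variables: `Sum.inl (s, i)` for the row `i` and `Sum.inr (s, j)` for
the column `j`, each with a label `s`. -/
abbrev Aux := (ℕ × ℕ) ⊕ (ℕ × ℕ)

/-- The labelling homomorphism: the variable at row `i` and column `j` is sent to the sum over the
labels `s ∈ {1, …, n}` admissible for `i` and `j` of the product of the auxiliary variables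
`(s, i)` and `(s, j)`. -/
noncomputable def phi (K : Type*) [Field K] (row col : σ → ℕ) (n : ℕ) (okR okC : ℕ → ℕ → Prop) :
    MvPolynomial σ K →ₐ[K] MvPolynomial Aux K :=
  MvPolynomial.aeval fun q => ∑ s ∈ Finset.range (n + 1),
    if (1 ≤ s ∧ okR s (row q)) ∧ okC s (col q) then
      MvPolynomial.X (Sum.inl (s, row q)) * MvPolynomial.X (Sum.inr (s, col q)) else 0

/-- The image of the generic `t × t` matrix is a product of two `t × t` matrices, indexed by the
labels `0, …, t - 1`, as the labels from `t` on are not admissible for it. Since no variable has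
the label `0`, the first factor has a zero column. -/
lemma phi_det (row col : σ → ℕ) (n : ℕ) (okR okC : ℕ → ℕ → Prop) {t : ℕ} (ht1 : 1 ≤ t)
    (htn : t ≤ n + 1) (f : Fin t → Fin t → σ) (ρ κ : Fin t → ℕ)
    (hrow : ∀ k l, row (f k l) = ρ k) (hcol : ∀ k l, col (f k l) = κ l)
    (hok : ∀ s, t ≤ s → s ≤ n → (∀ k, ¬ okR s (ρ k)) ∨ ∀ l, ¬ okC s (κ l)) :
    phi K row col n okR okC
      (Matrix.det (Matrix.of fun k l => (MvPolynomial.X (f k l) : MvPolynomial σ K))) = 0 := by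
  set P : Matrix (Fin t) (Fin t) (MvPolynomial Aux K) := Matrix.of fun k s =>
    if 1 ≤ (s : ℕ) ∧ okR s (ρ k) then MvPolynomial.X (Sum.inl ((s : ℕ), ρ k)) else 0 with hP
  set Q : Matrix (Fin t) (Fin t) (MvPolynomial Aux K) := Matrix.of fun s l =>
    if okC s (κ l) then MvPolynomial.X (Sum.inr ((s : ℕ), κ l)) else 0 with hQ
  have hmat : (phi K row col n okR okC).mapMatrix
      (Matrix.of fun k l => (MvPolynomial.X (f k l) : MvPolynomial σ K)) = P * Q := by
    ext1 k l
    rw [Matrix.mul_apply]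
    simp only [AlgHom.mapMatrix_apply, Matrix.map_apply, Matrix.of_apply, phi,
      MvPolynomial.aeval_X, hrow, hcol, hP, hQ]
    rw [Fin.sum_univ_eq_sum_range (fun s : ℕ =>
      (if 1 ≤ s ∧ okR s (ρ k) then (MvPolynomial.X (Sum.inl (s, ρ k)) : MvPolynomial Aux K)
        else 0) * (if okC s (κ l) then MvPolynomial.X (Sum.inr (s, κ l)) else 0))]
    rw [← Finset.sum_subset (Finset.range_subset_range.2 htn)]
    · refine Finset.sum_congr rfl fun s _ => ?_
      rw [ite_zero_mul_ite_zero]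
    · intro s hs hst
      rw [Finset.mem_range] at hs hst
      refine if_neg fun h => ?_
      rcases hok s (by omega) (by omega) with h' | h'
      · exact h' k h.1.2
      · exact h' l h.2
  rw [AlgHom.map_det, hmat, Matrix.det_mul,
    Matrix.det_eq_zero_of_column_eq_zero (⟨0, ht1⟩ : Fin t), zero_mul]
  intro k
  simp [hP]

/-- The exponent of the auxiliary monomial obtained by labelling the `i`-th variable of the
product of the `c i` with `p i`. -/
noncomputable def wexp (row col : σ → ℕ) {ℓ : ℕ} (c : Fin ℓ → σ) (p : Fin ℓ → ℕ) : Aux →₀ ℕ :=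
  ∑ i, (Finsupp.single (Sum.inl (p i, row (c i))) 1 + Finsupp.single (Sum.inr (p i, col (c i))) 1)

/-- The coefficients of the image of a monomial count its admissible labellings. -/
lemma coeff_phi (row col : σ → ℕ) (n : ℕ) (okR okC : ℕ → ℕ → Prop) {ℓ : ℕ} (c : Fin ℓ → σ)
    (w : Aux →₀ ℕ) :
    MvPolynomial.coeff w (phi K row col n okR okC
      (MvPolynomial.monomial (∑ i, Finsupp.single (c i) 1) 1)) =
    (((Fintype.piFinset fun _ : Fin ℓ => Finset.range (n + 1)).filter fun p =>
      (∀ i, (1 ≤ p i ∧ okR (p i) (row (c i))) ∧ okC (p i) (col (c i))) ∧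
        wexp row col c p = w).card : K) := by
  rw [MvPolynomial.monomial_sum_one, map_prod]
  have : ∀ i, phi K row col n okR okC (MvPolynomial.monomial (Finsupp.single (c i) 1) 1) =
      ∑ s ∈ Finset.range (n + 1),
    if (1 ≤ s ∧ okR s (row (c i))) ∧ okC s (col (c i)) then MvPolynomial.monomial
      (Finsupp.single (Sum.inl (s, row (c i))) 1 + Finsupp.single (Sum.inr (s, col (c i))) 1) 1
      else 0 := by
    intro i
    change phi K row col n okR okC (MvPolynomial.X (c i)) = _
    rw [phi, MvPolynomial.aeval_X]
    refine Finset.sum_congr rfl fun s _ => ?_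
    simp only [MvPolynomial.X, MvPolynomial.monomial_mul, one_mul]
  simp only [this]
  rw [Finset.prod_univ_sum, MvPolynomial.coeff_sum, Finset.card_filter, Nat.cast_sum]
  refine Finset.sum_congr rfl fun p _ => ?_
  by_cases h : ∀ i, (1 ≤ p i ∧ okR (p i) (row (c i))) ∧ okC (p i) (col (c i))
  · simp only [h, true_and, if_true, implies_true, and_self]
    rw [← MvPolynomial.monomial_sum_one, MvPolynomial.coeff_monomial]
    by_cases hw : wexp row col c p = w
    · rw [if_pos hw, if_pos (by exact hw), Nat.cast_one]
    · rw [if_neg hw, if_neg (by exact hw), Nat.cast_zero]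
  · rw [if_neg (fun h' => h h'.1)]
    push Not at h
    obtain ⟨i, hi⟩ := h
    rw [Finset.prod_eq_zero (Finset.mem_univ i) (if_neg (fun h' => hi h'.1 h'.2))]
    simp

/-- The multiset of the triples `(label, row, column)` of a labelled monomial. -/
noncomputable def labelled (row col : σ → ℕ) {ℓ : ℕ} (c : Fin ℓ → σ) (p : Fin ℓ → ℕ) :
    Multiset (ℕ × ℕ × ℕ) :=
  Finset.univ.val.map fun i => (p i, row (c i), col (c i))

lemma map_eq_of_count {ι α : Type*} [Fintype ι] (g g' : ι → α)
    (h : ∀ x, (Finset.univ.filter fun i => g i = x).card =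
      (Finset.univ.filter fun i => g' i = x).card) :
    Finset.univ.val.map g = Finset.univ.val.map g' := by
  ext x
  rw [Multiset.count_map, Multiset.count_map]
  have := h x
  simp only [eq_comm (a := x)]
  exact this

/-- The auxiliary exponent determines the multisets of labelled rows and labelled columns. -/
lemma labelled_maps (row col : σ → ℕ) {ℓ : ℕ} (c c' : Fin ℓ → σ) (p p' : Fin ℓ → ℕ)
    (h : wexp row col c p = wexp row col c' p') :
    (labelled row col c p).map (fun p => (p.1, p.2.1)) =
      (labelled row col c' p').map (fun p => (p.1, p.2.1)) ∧
    (labelled row col c p).map (fun p => (p.1, p.2.2)) =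
      (labelled row col c' p').map (fun p => (p.1, p.2.2)) := by
  simp only [labelled, Multiset.map_map, Function.comp_def]
  constructor
  · refine map_eq_of_count _ _ fun x => ?_
    have := DFunLike.congr_fun h (Sum.inl x)
    simp [wexp, Finsupp.finsetSum_apply, Finsupp.single_apply] at this
    convert this
  · refine map_eq_of_count _ _ fun x => ?_
    have := DFunLike.congr_fun h (Sum.inr x)
    simp [wexp, Finsupp.finsetSum_apply, Finsupp.single_apply] at this
    convert this

lemma wt_labelled (row col : σ → ℕ) {ℓ : ℕ} (c : Fin ℓ → σ) (p : Fin ℓ → ℕ) :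
    wt row col (∑ i, Finsupp.single (c i) 1) =
      ((labelled row col c p).map fun p => p.2.1 * p.2.2).sum := by
  simp only [labelled, Multiset.map_map, Function.comp_def, map_sum, wt_single]
  rfl

/-- Suppose that the support of `m` has an admissible labelling in which equally labelled
variables have rows and columns oppositely ordered. The coefficient of the auxiliary monomial of
this labelling is then the functional required in `indep_good`: by `rearrange`, that auxiliary
monomial occurs in the image of `m` with coefficient `1` and otherwise only in images of monomials
of larger weight. -/
lemma exists_functional (row col : σ → ℕ) (hinj : Function.Injective fun q => (row q, col q))
    (n : ℕ) (okR okC : ℕ → ℕ → Prop) (I : Ideal (MvPolynomial σ K))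
    (hI : ∀ f ∈ I, phi K row col n okR okC f = 0) (ℓ : ℕ) (m : σ →₀ ℕ) (hm : m.degree = ℓ)
    (lab : σ → ℕ)
    (hlab : ∀ p ∈ m.support, (1 ≤ lab p ∧ lab p ≤ n) ∧ (okR (lab p) (row p) ∧ okC (lab p) (col p)) ∧
      ∀ q ∈ m.support, lab p = lab q →
        (row p ≤ row q ∧ col q ≤ col p) ∨ (row q ≤ row p ∧ col p ≤ col q)) :
    ∃ F : MvPolynomial σ K →ₗ[K] K, (∀ f ∈ I, F f = 0) ∧ F (MvPolynomial.monomial m 1) = 1 ∧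
        ∀ m' : σ →₀ ℕ, m'.degree = ℓ → m' ≠ m → F (MvPolynomial.monomial m' 1) ≠ 0 →
          wt row col m < wt row col m' := by
  obtain ⟨c, rfl⟩ := exists_listing ℓ m hm
  have hc : ∀ i, c i ∈ (∑ i, Finsupp.single (c i) 1 : σ →₀ ℕ).support := by
    intro i
    rw [Finsupp.mem_support_iff, Finsupp.finsetSum_apply]
    have : (1 : ℕ) ≤ ∑ j, (Finsupp.single (c j) 1 : σ →₀ ℕ) (c i) := by
      refine le_trans ?_ (Finset.single_le_sum (fun j _ => Nat.zero_le _) (Finset.mem_univ i))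
      simp
    omega
  set w := wexp row col c (lab ∘ c) with hw
  have hanti : ∀ p ∈ labelled row col c (lab ∘ c), ∀ q ∈ labelled row col c (lab ∘ c),
      p.1 = q.1 → (p.2.1 ≤ q.2.1 ∧ q.2.2 ≤ p.2.2) ∨ (q.2.1 ≤ p.2.1 ∧ p.2.2 ≤ q.2.2) := by
    intro p hp q hq hpq
    obtain ⟨i, _, rfl⟩ := Multiset.mem_map.1 hp
    obtain ⟨j, _, rfl⟩ := Multiset.mem_map.1 hq
    exact (hlab _ (hc i)).2.2 _ (hc j) hpq
  have key : ∀ (c' : Fin ℓ → σ) (p : Fin ℓ → ℕ), wexp row col c' p = w →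
      labelled row col c (lab ∘ c) = labelled row col c' p ∨
      wt row col (∑ i, Finsupp.single (c i) 1) < wt row col (∑ i, Finsupp.single (c' i) 1) := by
    intro c' p hp
    obtain ⟨h1, h2⟩ := labelled_maps row col c c' (lab ∘ c) p hp.symm
    rw [wt_labelled row col c (lab ∘ c), wt_labelled row col c' p]
    exact rearrange _ _ _ rfl hanti h1 h2
  refine ⟨(MvPolynomial.lcoeff K w) ∘ₗ (phi K row col n okR okC).toLinearMap, ?_, ?_, ?_⟩
  · intro f hf
    simp [hI f hf]
  · simp only [LinearMap.comp_apply, AlgHom.toLinearMap_apply, MvPolynomial.lcoeff_apply]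
    rw [coeff_phi]
    have : ((Fintype.piFinset fun _ : Fin ℓ => Finset.range (n + 1)).filter fun p =>
      (∀ i, (1 ≤ p i ∧ okR (p i) (row (c i))) ∧ okC (p i) (col (c i))) ∧
        wexp row col c p = w) = {lab ∘ c} := by
      ext p
      simp only [Finset.mem_filter, Fintype.mem_piFinset, Finset.mem_range, Finset.mem_singleton]
      constructor
      · rintro ⟨_, _, h⟩
        rcases key c p h with h1 | h1
        · funext i
          have : (p i, row (c i), col (c i)) ∈ labelled row col c (lab ∘ c) := by
            rw [h1]
            exact Multiset.mem_map_of_mem _ (Finset.mem_univ_val i)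
          obtain ⟨j, _, hj⟩ := Multiset.mem_map.1 this
          simp only [Prod.mk.injEq] at hj
          have hji : c j = c i := hinj (Prod.ext hj.2.1 hj.2.2)
          simp only [Function.comp] at hj ⊢
          rw [← hj.1, hji]
        · exact absurd h1 (lt_irrefl _)
      · rintro rfl
        refine ⟨fun i => ?_, fun i => ?_, rfl⟩
        · have := (hlab _ (hc i)).1
          simp only [Function.comp]
          omega
        · have h := hlab _ (hc i)
          exact ⟨⟨h.1.1, h.2.1.1⟩, h.2.1.2⟩
    rw [this]
    simp
  · intro m' hm' hne hF
    obtain ⟨c', rfl⟩ := exists_listing ℓ m' hm'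
    simp only [LinearMap.comp_apply, AlgHom.toLinearMap_apply, MvPolynomial.lcoeff_apply] at hF
    rw [coeff_phi] at hF
    obtain ⟨p, hp⟩ : (((Fintype.piFinset fun _ : Fin ℓ => Finset.range (n + 1)).filter fun p =>
      (∀ i, (1 ≤ p i ∧ okR (p i) (row (c' i))) ∧ okC (p i) (col (c' i))) ∧
        wexp row col c' p = w)).Nonempty := by
      rw [Finset.nonempty_iff_ne_empty]
      intro h
      rw [h] at hF
      simp at hF
    rcases key c' p (Finset.mem_filter.1 hp).2.2 with h | h
    · exfalso
      apply hne
      have h1 := congrArg (Multiset.map fun p : ℕ × ℕ × ℕ => p.2) h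
      simp only [labelled, Multiset.map_map, Function.comp_def] at h1
      have h2 : (Finset.univ.val.map c).map (fun q => (row q, col q)) =
          (Finset.univ.val.map c').map (fun q => (row q, col q)) := by
        simpa only [Multiset.map_map, Function.comp_def] using h1
      have h3 := Multiset.map_injective hinj h2
      have h4 := congrArg (fun s => (s.map fun q => (Finsupp.single q 1 : σ →₀ ℕ)).sum) h3
      simp only [Multiset.map_map, Function.comp_def] at h4
      exact h4.symm
    · exact h

end Algebra


/-! ### Corners of the region -/

section Corners
variable {A B : ℤ} {a e : ℕ → ℤ} {n : ℕ} {G : Finset (ℤ × ℤ)}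

/-- The inwards corners of the upper boundary of `G`. -/
def corners (G : Finset (ℤ × ℤ)) : Set (ℤ × ℤ) :=
  {c | c ∈ G ∧ (c.1 - 1, c.2) ∈ G ∧ (c.1, c.2 + 1) ∈ G ∧ (c.1 - 1, c.2 + 1) ∉ G}

lemma corner_bounds (hG : Region A B a e n G) {c : ℤ × ℤ} (hc : c ∈ corners G) :
    (∀ i, 1 ≤ i → i ≤ n → c.1 ≤ e i ∧ a i ≤ c.2) ∧ ∀ p ∈ G, WeaklySE p c := by
  obtain ⟨h1, h2, h3, h4⟩ := hc
  have b1 := hG.box _ h1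
  have b2 := hG.box _ h2
  have b3 := hG.box _ h3
  simp only at b2 b3
  have main : ∀ p ∈ G, WeaklySE p c := by
    intro p hp
    by_contra hcon
    simp only [WeaklySE, not_or, not_le] at hcon
    exact h4 (hG.closed p hp _ (by simp only; omega) (by simp only; omega) (by simp only; omega)
      (by simp only; omega))
  refine ⟨fun i hi1 hi2 => ?_, main⟩
  obtain ⟨h5, h6⟩ := hG.ends i hi1 hi2
  have m5 := main _ h5
  have m6 := main _ h6
  simp only [WeaklySE] at m5 m6
  omega

/-- If a point of the diagonal set were outside `G`, then the boundary of `G` would have a corner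
strictly to the right of it and strictly below it, on a lower diagonal than `μ` permits. -/
lemma diagSet_subset (hG : Region A B a e n G) {i : ℕ} (hi1 : 1 ≤ i) (hi2 : i ≤ n) {μ : ℤ}
    (h1 : μ ≤ a i) (h2 : μ ≤ A - e i) (h3 : ∀ c ∈ corners G, μ ≤ c.2 - c.1) :
    diagSet (a i) (e i) μ ⊆ G := by
  rintro ⟨x, y⟩ hp
  rw [mem_diagSet] at hp
  simp only at hp
  obtain ⟨he1, he2⟩ := hG.ends i hi1 hi2
  have b1 := hG.box _ he1
  have b2 := hG.box _ he2
  simp only at b1 b2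
  by_contra hpG
  have hey : (e i, y) ∈ G := hG.closed _ he2 _ le_rfl b2.2.1 (by simp only; omega)
    (by simp only; omega)
  -- The corner is `(x0, y0)`: `x0` is the first column to the right of `x` reached by `G` at
  -- height `y'`, and `y0` the height of `G` in the column `x0 - 1`.
  obtain ⟨⟨x0, y'⟩, hx0, hmin⟩ := Finset.exists_min_image
    (G.filter fun q => q.2 = y ∧ x ≤ q.1) (fun q => q.1)
    ⟨_, Finset.mem_filter.2 ⟨hey, rfl, by simp only; omega⟩⟩
  simp only [Finset.mem_filter] at hx0 hmin
  obtain ⟨hx0G, rfl, hx0x⟩ := hx0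
  have hxne : x0 ≠ x := by
    rintro rfl
    exact hpG hx0G
  have hnot : (x0 - 1, y') ∉ G := by
    intro h
    have := hmin _ ⟨h, rfl, by simp only; omega⟩
    simp only at this
    omega
  have bx0 := hG.box _ hx0G
  simp only at bx0
  have haG : (x0 - 1, a i) ∈ G := hG.closed _ he1 _ (by simp only; omega) (by simp only; omega)
    (by simp only; omega) le_rfl
  obtain ⟨⟨x1, y0⟩, hy0, hmax⟩ := Finset.exists_max_image
    (G.filter fun q => q.1 = x0 - 1) (fun q => q.2) ⟨_, Finset.mem_filter.2 ⟨haG, rfl⟩⟩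
  simp only [Finset.mem_filter] at hy0 hmax
  obtain ⟨hy0G, rfl⟩ := hy0
  have by0 := hG.box _ hy0G
  simp only at by0
  have hlt : y0 < y' := by
    by_contra hcon
    exact hnot (hG.closed _ hy0G _ le_rfl (by simp only; omega) (by simp only; omega)
      (by simp only; omega))
  have hc : (x0, y0) ∈ corners G := by
    refine ⟨?_, hy0G, ?_, ?_⟩
    · exact hG.closed _ hx0G _ le_rfl (by simp only; omega) (by simp only; omega)
        (by simp only; omega)
    · exact hG.closed _ hx0G _ le_rfl (by simp only; omega) (by simp only; omega)
        (by simp only; omega)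
    · intro h
      have := hmax _ ⟨h, rfl⟩
      simp only at this
      omega
  have := h3 _ hc
  simp only at this
  omega

/-- The upper bound of `natDegree_numer_le` is attained by the diagonal turn sets. The numerator
does not vanish at `1` because its coefficients are natural numbers. -/
lemma natDegree_numer (hG : Region A B a e n G)
    (ham : ∀ i j, 1 ≤ i → i < j → j ≤ n → a i < a j)
    (hem : ∀ i j, 1 ≤ i → i < j → j ≤ n → e j < e i) (μ : ℕ → ℤ)
    (hle : ∀ i, 1 ≤ i → i ≤ n → μ i ≤ a i ∧ μ i ≤ A - e i ∧ ∀ c ∈ corners G, μ i ≤ c.2 - c.1)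
    (hstep : ∀ i j, 1 ≤ i → i < j → j ≤ n → μ i + 2 ≤ μ j)
    (hmem : ∀ i, 1 ≤ i → i ≤ n →
      (∃ c ∈ corners G, μ i = c.2 - c.1 - 2 * ((n : ℤ) - i)) ∨
      ∃ j : ℕ, i ≤ j ∧ j ≤ n ∧
        (μ i = a j - 2 * ((j : ℤ) - i) ∨ μ i = A - e j - 2 * ((j : ℤ) - i))) :
    ((numer a e n G).natDegree : ℤ) = ∑ i ∈ Finset.Icc 1 n, (e i - a i + μ i) ∧
      (numer a e n G).eval 1 ≠ 0 := by
  have hup := natDegree_numer_le μ n G (corners G) hG ham hem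
    (fun c hc => corner_bounds hG hc) hmem
  have hlow := coeff_numer_pos (a := a) (e := e) μ n G (fun i hi1 hi2 =>
    diagSet_subset hG hi1 hi2 (hle i hi1 hi2).1 (hle i hi1 hi2).2.1 (hle i hi1 hi2).2.2) hstep
  have h1 := Polynomial.le_natDegree_of_ne_zero hlow.ne'
  have h2 : ∑ i ∈ Finset.Icc 1 n, (e i - a i + μ i) ≤
      ((∑ i ∈ Finset.Icc 1 n, (e i - a i + μ i).toNat : ℕ) : ℤ) := by
    rw [Nat.cast_sum]
    exact Finset.sum_le_sum fun i _ => Int.self_le_toNat _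
  refine ⟨by omega, ?_⟩
  rw [Polynomial.eval_eq_sum_range]
  simp only [one_pow, mul_one]
  have := Finset.single_le_sum (f := fun i => (numer a e n G).coeff i)
    (fun i _ => Nat.zero_le _) (Finset.mem_range.2 (Nat.lt_succ_of_le h1))
  exact (hlow.trans_le this).ne'

end Corners

/-! ### The ladder determinantal ring -/

section Ladder
variable {A B : ℕ} (Λ : Set (Fin (A + 1) × Fin (B + 1)))

/-- The point of the ladder region at a position of the ladder. -/
def pt (q : {q // q ∈ Λ}) : ℤ × ℤ := (((q.1.2 : ℕ) : ℤ), (A : ℤ) - ((q.1.1 : ℕ) : ℤ))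

lemma pt_injective : Function.Injective (pt Λ) := by
  rintro ⟨⟨i, j⟩, h⟩ ⟨⟨i', j'⟩, h'⟩ heq
  simp only [pt, Prod.mk.injEq] at heq
  have h1 : i = i' := Fin.ext (by omega)
  have h2 : j = j' := Fin.ext (by omega)
  subst h1 h2
  rfl

/-- The ladder region as a finite set. -/
noncomputable def regionSet : Finset (ℤ × ℤ) := Finset.univ.image (pt Λ)

lemma mem_regionSet {p : ℤ × ℤ} : p ∈ regionSet Λ ↔ p ∈ ladderRegion Λ := by
  simp only [regionSet, Finset.mem_image, Finset.mem_univ, true_and, ladderRegion, pt,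
    Set.mem_ofPred_eq, Subtype.exists]
  constructor
  · rintro ⟨q, h, rfl⟩
    exact ⟨q, h, rfl⟩
  · rintro ⟨q, h, rfl⟩
    exact ⟨q, h, rfl⟩

variable {Λ}

lemma region_ladder (hΛ : IsLadder Λ) (hupper : (Fin.last A, Fin.last B) ∈ Λ)
    {a e : ℕ → ℤ} {n : ℕ} (hends : ∀ j, 1 ≤ j → j ≤ n →
      ((0 : ℤ), a j) ∈ ladderRegion Λ ∧ (e j, (A : ℤ)) ∈ ladderRegion Λ) :
    Region A B a e n (regionSet Λ) where
  box p hp := by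
    obtain ⟨⟨⟨i, j⟩, h⟩, _, rfl⟩ := Finset.mem_image.1 hp
    simp only [pt]
    omega
  closed p hp q h1 h2 h3 h4 := by
    obtain ⟨⟨⟨i, j⟩, h⟩, _, rfl⟩ := Finset.mem_image.1 hp
    simp only [pt] at h1 h4
    rw [mem_regionSet]
    have hi := i.2
    refine ⟨(⟨((A : ℤ) - q.2).toNat, by omega⟩, ⟨q.1.toNat, by omega⟩), ?_, ?_⟩
    · refine hΛ _ h _ hupper ?_ ?_ _ _ ?_ ?_ ?_ ?_
      · exact Fin.le_last _
      · exact Fin.le_last _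
      · rw [Fin.le_def]; simp only; omega
      · exact Fin.le_last _
      · rw [Fin.le_def]; simp only; omega
      · exact Fin.le_last _
    · exact Prod.ext (by simp only; omega) (by simp only; omega)
  ends i h1 h2 := by
    rw [mem_regionSet, mem_regionSet]
    exact hends i h1 h2

variable (K : Type*) [Field K]

lemma minor_eq {t : ℕ} (r : Fin t → Fin (A + 1)) (c : Fin t → Fin (B + 1))
    (h : ∀ k l, (r k, c l) ∈ Λ) :
    (ladderMatrix K Λ).submatrix r c =
      Matrix.of fun k l => (MvPolynomial.X ⟨(r k, c l), h k l⟩ : MvPolynomial {q // q ∈ Λ} K) := by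
  ext1 k l
  simp [ladderMatrix, h k l]

/-- The monomials with good support form a basis of each graded component of the quotient. -/
lemma quotDim_ladder (hΛ : IsLadder Λ) (n : ℕ) (u v : ℕ → ℕ)
    (hu_mono : ∀ i j, 1 ≤ i → i < j → j ≤ n → u i < u j)
    (hv_mono : ∀ i j, 1 ≤ i → i < j → j ≤ n → v i < v j)
    (hu_top : u (n + 1) = A + 2) (ℓ : ℕ) :
    quotDim K (ladderIdeal K Λ n u v) ℓ =
      Nat.card {m : {q // q ∈ Λ} →₀ ℕ // m.degree = ℓ ∧
        Good (fun i => (u i : ℤ) - 1) (fun i => (B : ℤ) - v i + 1) n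
          (m.support.image (pt Λ))} := by
  set a : ℕ → ℤ := fun i => (u i : ℤ) - 1 with ha
  set e : ℕ → ℤ := fun i => (B : ℤ) - v i + 1 with he
  set row : {q // q ∈ Λ} → ℕ := fun q => (q.1.1 : ℕ) with hrow
  set col : {q // q ∈ Λ} → ℕ := fun q => (q.1.2 : ℕ) with hcol
  refine quotDim_eq (ladderIdeal K Λ n u v) (fun m => Good a e n (m.support.image (pt Λ)))
    (wt row col) ?_ ℓ ?_
  · intro m hm
    obtain ⟨t, ht1, ht2, c, hcS, hc, hcon⟩ := exists_bad_chain n _ hm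
    have hq : ∀ i, ∃ q ∈ m.support, pt Λ q = c i := fun i => Finset.mem_image.1 (hcS i)
    choose q hqm hqc using hq
    have hr : StrictMono fun i => (q i).1.1 := by
      intro i j hij
      have := (hc i j hij).2
      rw [← hqc, ← hqc] at this
      simp only [pt] at this
      simp only [Fin.lt_def]
      omega
    have hcc : StrictMono fun i => (q i).1.2 := by
      intro i j hij
      have := (hc i j hij).1
      rw [← hqc, ← hqc] at this
      simp only [pt] at this
      simp only [Fin.lt_def]
      omega
    -- By the ladder property, the whole minor with main diagonal `q` lies in the ladder.
    have hmem : ∀ k l, ((q k).1.1, (q l).1.2) ∈ Λ := fun k l =>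
      hΛ _ (q (min k l)).2 _ (q (max k l)).2 (hr.monotone min_le_max) (hcc.monotone min_le_max) _ _
        (hr.monotone (min_le_left _ _)) (hr.monotone (le_max_left _ _))
        (hcc.monotone (min_le_right _ _)) (hcc.monotone (le_max_right _ _))
    obtain ⟨g, hg, h, hgh⟩ := exists_reduction (K := K) row col
      (fun k l => (⟨((q k).1.1, (q l).1.2), hmem k l⟩ : {q // q ∈ Λ}))
      (fun k => ((q k).1.1 : ℕ)) (fun l => ((q l).1.2 : ℕ)) hr hcc
      (fun _ _ => rfl) (fun _ _ => rfl) m hqm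
    refine ⟨g, hg, ?_⟩
    rw [hgh]
    refine Ideal.mul_mem_left _ _ (Ideal.subset_span
      ⟨t, ht1, ht2, fun i => (q i).1.1, fun i => (q i).1.2, hr, hcc, hmem, ?_, ?_⟩)
    -- For `t = n + 1` the row condition is void because `u (n + 1) = A + 2`.
    · rcases Nat.lt_or_ge n t with htn | htn
      · obtain rfl : t = n + 1 := by omega
        left
        intro k
        omega
      · rcases hcon htn with hcon | hcon
        · left
          intro k
          have := hcon k
          rw [← hqc] at this
          simp only [pt, ha] at this ⊢
          omega
        · right
          intro k
          have := hcon k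
          rw [← hqc] at this
          simp only [pt, he] at this ⊢
          omega
    · rw [minor_eq K _ _ hmem]
  · intro m hm hgood
    obtain ⟨lab, hlab⟩ := exists_label (A := A) n _ (by
      intro p hp
      obtain ⟨q, _, rfl⟩ := Finset.mem_image.1 hp
      simp only [pt]
      omega) hgood
    refine exists_functional row col ?_ n (fun s r => a s ≤ (A : ℤ) - r) (fun s c => (c : ℤ) ≤ e s)
      _ ?_ ℓ m hm (fun q => lab (pt Λ q)) ?_
    · rintro ⟨⟨i, j⟩, h⟩ ⟨⟨i', j'⟩, h'⟩ heq
      simp only [hrow, hcol, Prod.mk.injEq] at heq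
      have h1 : i = i' := Fin.ext heq.1
      have h2 : j = j' := Fin.ext heq.2
      subst h1 h2
      rfl
    · intro f hf
      have hle : ladderIdeal K Λ n u v ≤ RingHom.ker (phi K row col n
          (fun s r => a s ≤ (A : ℤ) - r) (fun s c => (c : ℤ) ≤ e s)) := by
        rw [ladderIdeal, Ideal.span_le]
        rintro _ ⟨t, ht1, ht2, r, c, hr, hc, hmem, hcon, rfl⟩
        rw [SetLike.mem_coe, RingHom.mem_ker, minor_eq K r c hmem]
        refine phi_det row col n _ _ ht1 ht2 _ (fun k => (r k : ℕ)) (fun l => (c l : ℕ))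
          (fun _ _ => rfl) (fun _ _ => rfl) ?_
        -- The rows or columns excluded for the label `t` are excluded for all larger labels.
        intro s hs1 hs2
        have hus : u t ≤ u s := by
          rcases hs1.eq_or_lt with rfl | h
          · exact le_rfl
          · exact (hu_mono t s ht1 h hs2).le
        have hvs : v t ≤ v s := by
          rcases hs1.eq_or_lt with rfl | h
          · exact le_rfl
          · exact (hv_mono t s ht1 h hs2).le
        rcases hcon with h | h
        · left
          intro k
          have := h k
          simp only [ha]
          omega
        · right
          intro k
          have := h k
          simp only [he]
          omega
      exact hle hf
    · intro p hp
      obtain ⟨h1, h2, h3⟩ := hlab _ (Finset.mem_image_of_mem _ hp)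
      refine ⟨h1, h2, ?_⟩
      intro q hq hpq
      have := h3 _ (Finset.mem_image_of_mem _ hq) hpq
      simp only [pt] at this
      simp only [hrow, hcol]
      omega

/-- The Hilbert series is the numerator over `(1 - X) ^ d`, with `d` the total number of points of
`n` non-crossing paths. -/
lemma hilbertSeries_ladder (hΛ : IsLadder Λ) (hupper : (Fin.last A, Fin.last B) ∈ Λ)
    (n : ℕ) (u v : ℕ → ℕ)
    (hu_mono : ∀ i j, 1 ≤ i → i < j → j ≤ n → u i < u j)
    (hv_mono : ∀ i j, 1 ≤ i → i < j → j ≤ n → v i < v j)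
    (hu_top : u (n + 1) = A + 2)
    (hAE : ∀ j, 1 ≤ j → j ≤ n →
      ((0 : ℤ), (u j : ℤ) - 1) ∈ ladderRegion Λ ∧
      ((B : ℤ) - (v j : ℤ) + 1, (A : ℤ)) ∈ ladderRegion Λ)
    (d : ℕ) (hd : (d : ℤ) = ((A : ℤ) + (B : ℤ) + 3) * n -
      ∑ i ∈ Finset.Icc 1 n, ((u i : ℤ) + (v i : ℤ))) :
    hilbertSeries K (ladderIdeal K Λ n u v) * (1 - PowerSeries.X) ^ d =
      (((numer (fun i => (u i : ℤ) - 1) (fun i => (B : ℤ) - v i + 1) n (regionSet Λ)).map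
        (Nat.castRingHom ℤ) : Polynomial ℤ) : PowerSeries ℤ) := by
  set V : PowerSeries ℤ := PowerSeries.mk fun _ => 1 with hV
  have hV1 : V * (1 - PowerSeries.X) = 1 := PowerSeries.mk_one_mul_one_sub_eq_one ℤ
  have hV2 : 1 + PowerSeries.X * V = V := by linear_combination -hV1
  set a : ℕ → ℤ := fun i => (u i : ℤ) - 1 with ha
  set e : ℕ → ℤ := fun i => (B : ℤ) - v i + 1 with he
  have hG : Region A B a e n (regionSet Λ) := region_ladder hΛ hupper hAE
  have hexp : ∑ i ∈ Finset.Icc 1 n, (e i + A - a i + 1).toNat = d := by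
    zify
    rw [hd, Finset.sum_congr rfl (g := fun i => ((A : ℤ) + B + 3) - ((u i : ℤ) + v i))]
    · rw [Finset.sum_sub_distrib, Finset.sum_const, Nat.card_Icc]
      simp
      ring
    · intro i hi
      rw [Finset.mem_Icc] at hi
      obtain ⟨h1, h2⟩ := hG.ends i hi.1 hi.2
      have b1 := hG.box _ h1
      have b2 := hG.box _ h2
      simp only [ha, he] at b1 b2 ⊢
      omega
  have hgen := gen_fun V hV2 n (regionSet Λ) hG
    (fun i j h1 h2 h3 => by have := hu_mono i j h1 h2 h3; simp only [ha]; omega)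
    (fun i j h1 h2 h3 => by have := hv_mono i j h1 h2 h3; simp only [he]; omega)
  have hsum : hilbertSeries K (ladderIdeal K Λ n u v) =
      ∑ S ∈ (regionSet Λ).powerset.filter (Good a e n), (PowerSeries.X * V) ^ S.card := by
    rw [hilbert_eq (ladderIdeal K Λ n u v) (fun S => Good a e n (S.image (pt Λ))) V hV
      (quotDim_ladder K hΛ n u v hu_mono hv_mono hu_top)]
    refine Finset.sum_nbij (fun S => S.image (pt Λ)) ?_ ?_ ?_ ?_
    · intro S hS
      rw [Finset.mem_filter] at hS ⊢
      exact ⟨Finset.mem_powerset.2 (Finset.image_subset_image (Finset.subset_univ _)), hS.2⟩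
    · exact (Finset.image_injective (pt_injective Λ)).injOn
    · intro T hT
      rw [Finset.mem_coe, Finset.mem_filter, Finset.mem_powerset] at hT
      obtain ⟨S, _, rfl⟩ := Finset.subset_image_iff.1 hT.1
      exact ⟨S, by simpa using hT.2, rfl⟩
    · intro S _
      rw [Finset.card_image_of_injective _ (pt_injective Λ)]
  rw [hsum, hgen, hexp, mul_assoc, ← mul_pow, hV1, one_pow, mul_one]

end Ladder
end LadderAInv

theorem cor2_one_sided_a_invariant (K : Type*) [Field K] (A B n : ℕ) (hn : 1 ≤ n)
    (Λ : Set (Fin (A + 1) × Fin (B + 1))) (hΛ : IsLadder Λ)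
    (hupper : (Fin.last A, Fin.last B) ∈ Λ)
    (u v : ℕ → ℕ)
    (hu_mono : ∀ i j, 1 ≤ i → i < j → j ≤ n → u i < u j)
    (hv_mono : ∀ i j, 1 ≤ i → i < j → j ≤ n → v i < v j)
    (hu_range : ∀ i, 1 ≤ i → i ≤ n → 1 ≤ u i ∧ u i ≤ A + 1)
    (hv_range : ∀ i, 1 ≤ i → i ≤ n → 1 ≤ v i ∧ v i ≤ B + 1)
    (hu_top : u (n + 1) = A + 2) (hv_top : v (n + 1) = B + 2)
    (hAE : ∀ j, 1 ≤ j → j ≤ n →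
      ((0 : ℤ), (u j : ℤ) - 1) ∈ ladderRegion Λ ∧
      ((B : ℤ) - (v j : ℤ) + 1, (A : ℤ)) ∈ ladderRegion Λ)
    (m : ℕ) (x y : Fin m → ℤ)
    (hcorners : ∀ P : ℤ × ℤ,
      (P ∈ ladderRegion Λ ∧ (P.1 - 1, P.2) ∈ ladderRegion Λ ∧
        (P.1, P.2 + 1) ∈ ladderRegion Λ ∧ (P.1 - 1, P.2 + 1) ∉ ladderRegion Λ) ↔
      ∃ k : Fin m, P = (x k, y k))
    (d : ℕ)
    (hd : (d : ℤ) = ((A : ℤ) + (B : ℤ) + 3) * n -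
      ∑ i ∈ Finset.Icc 1 n, ((u i : ℤ) + (v i : ℤ))) :
    ∃ H : Polynomial ℤ, H.eval 1 ≠ 0 ∧
      hilbertSeries K (ladderIdeal K Λ n u v) * (1 - PowerSeries.X) ^ d =
        (↑H : PowerSeries ℤ) ∧
      (H.natDegree : ℤ) - (d : ℤ) =
        (∑ i ∈ Finset.Icc 1 n, sInf
          ({z : ℤ | ∃ j, 1 ≤ j ∧ j ≤ i ∧
              z = (B : ℤ) + (u (n - j + 1) : ℤ) - 1 - 2 * ((i : ℤ) - (j : ℤ))} ∪
            {z : ℤ | ∃ j, 1 ≤ j ∧ j ≤ i ∧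
              z = (A : ℤ) + (v (n - j + 1) : ℤ) - 1 - 2 * ((i : ℤ) - (j : ℤ))} ∪
            {z : ℤ | ∃ k : Fin m,
              z = (B : ℤ) - x k + y k - 2 * ((i : ℤ) - 1)})) -
        ((A : ℤ) + (B : ℤ) + 1) * n := by
  set Z : ℕ → Set ℤ := fun i =>
          ({z : ℤ | ∃ j, 1 ≤ j ∧ j ≤ i ∧
              z = (B : ℤ) + (u (n - j + 1) : ℤ) - 1 - 2 * ((i : ℤ) - (j : ℤ))} ∪
            {z : ℤ | ∃ j, 1 ≤ j ∧ j ≤ i ∧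
              z = (A : ℤ) + (v (n - j + 1) : ℤ) - 1 - 2 * ((i : ℤ) - (j : ℤ))} ∪
            {z : ℤ | ∃ k : Fin m,
              z = (B : ℤ) - x k + y k - 2 * ((i : ℤ) - 1)}) with hZ
  have hbdd : ∀ i, BddBelow (Z i) := by
    intro i
    refine BddBelow.union (BddBelow.union ?_ ?_) ?_
    · refine ((Set.finite_Icc 1 i).image fun j : ℕ =>
        (B : ℤ) + (u (n - j + 1) : ℤ) - 1 - 2 * ((i : ℤ) - (j : ℤ))).bddBelow.mono ?_
      rintro z ⟨j, h1, h2, rfl⟩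
      exact ⟨j, ⟨h1, h2⟩, rfl⟩
    · refine ((Set.finite_Icc 1 i).image fun j : ℕ =>
        (A : ℤ) + (v (n - j + 1) : ℤ) - 1 - 2 * ((i : ℤ) - (j : ℤ))).bddBelow.mono ?_
      rintro z ⟨j, h1, h2, rfl⟩
      exact ⟨j, ⟨h1, h2⟩, rfl⟩
    · refine (Set.finite_range fun k : Fin m =>
        (B : ℤ) - x k + y k - 2 * ((i : ℤ) - 1)).bddBelow.mono ?_
      rintro z ⟨k, rfl⟩
      exact ⟨k, rfl⟩
  have hne : ∀ i, 1 ≤ i → (Z i).Nonempty := fun i hi => ⟨_, Or.inl (Or.inl ⟨1, le_rfl, hi, rfl⟩)⟩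
  have hZmem : ∀ i, 1 ≤ i → sInf (Z i) ∈ Z i := fun i hi => Int.csInf_mem (hne i hi) (hbdd i)
  have hZle : ∀ i, ∀ z ∈ Z i, sInf (Z i) ≤ z := fun i z hz => csInf_le (hbdd i) hz
  have hcor : ∀ P, P ∈ LadderAInv.corners (LadderAInv.regionSet Λ) ↔
      ∃ k : Fin m, P = (x k, y k) := by
    intro P
    rw [← hcorners]
    simp only [LadderAInv.corners, Set.mem_ofPred_eq, LadderAInv.mem_regionSet]
  -- An element of `Z i` lowered by `2 * (j - i)` belongs to `Z j`.
  have hZstep : ∀ i j, 1 ≤ i → i < j → sInf (Z j) + 2 ≤ sInf (Z i) := by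
    intro i j hi hij
    have : sInf (Z i) - 2 * ((j : ℤ) - i) ∈ Z j := by
      rcases hZmem i hi with (⟨l, h1, h2, h3⟩ | ⟨l, h1, h2, h3⟩) | ⟨l, h3⟩
      · exact Or.inl (Or.inl ⟨l, h1, by omega, by rw [h3]; ring⟩)
      · exact Or.inl (Or.inr ⟨l, h1, by omega, by rw [h3]; ring⟩)
      · exact Or.inr ⟨l, by rw [h3]; ring⟩
    have := hZle j _ this
    omega
  have hG : LadderAInv.Region A B (fun i => (u i : ℤ) - 1) (fun i => (B : ℤ) - v i + 1) n
      (LadderAInv.regionSet Λ) := LadderAInv.region_ladder hΛ hupper hAE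
  -- The paths are numbered from the lowest one upwards, the sets `Z i` from the uppermost one
  -- downwards, whence the reversal `k ↦ n + 1 - k`. The shift by `B` comes from
  -- `e k = B - v k + 1`.
  obtain ⟨hdeg, heval⟩ := LadderAInv.natDegree_numer hG
    (fun i j h1 h2 h3 => by have := hu_mono i j h1 h2 h3; omega)
    (fun i j h1 h2 h3 => by have := hv_mono i j h1 h2 h3; omega)
    (fun k => sInf (Z (n + 1 - k)) - B) (by
      intro k hk1 hk2
      have hk : n - (n + 1 - k) + 1 = k := by omega
      have e1 := hZle (n + 1 - k) _ (Or.inl (Or.inl ⟨n + 1 - k, by omega, le_rfl, rfl⟩))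
      have e2 := hZle (n + 1 - k) _ (Or.inl (Or.inr ⟨n + 1 - k, by omega, le_rfl, rfl⟩))
      rw [hk] at e1 e2
      refine ⟨by omega, by omega, ?_⟩
      intro c hc
      obtain ⟨l, rfl⟩ := (hcor c).1 hc
      have e3 := hZle (n + 1 - k) _ (Or.inr ⟨l, rfl⟩)
      omega) (by
      intro i j h1 h2 h3
      have := hZstep (n + 1 - j) (n + 1 - i) (by omega) (by omega)
      omega) (by
      intro k hk1 hk2
      rcases hZmem (n + 1 - k) (by omega) with (⟨l, h1, h2, h3⟩ | ⟨l, h1, h2, h3⟩) | ⟨l, h3⟩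
      · refine Or.inr ⟨n - l + 1, by omega, by omega, Or.inl ?_⟩
        omega
      · refine Or.inr ⟨n - l + 1, by omega, by omega, Or.inr ?_⟩
        omega
      · refine Or.inl ⟨(x l, y l), (hcor _).2 ⟨l, rfl⟩, ?_⟩
        omega)
  refine ⟨_, ?_, LadderAInv.hilbertSeries_ladder K hΛ hupper n u v hu_mono hv_mono hu_top hAE d hd,
    ?_⟩
  · rw [Polynomial.eval_map, Polynomial.eval₂_at_one]
    exact fun h => heval (by simpa using h)
  · rw [Polynomial.natDegree_map_eq_of_injective (Nat.castRingHom ℤ).injective_nat, hdeg, hd]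
    have hrefl : ∑ k ∈ Finset.Icc 1 n, sInf (Z (n + 1 - k)) = ∑ i ∈ Finset.Icc 1 n, sInf (Z i) := by
      refine Finset.sum_nbij' (fun k => n + 1 - k) (fun k => n + 1 - k) ?_ ?_ ?_ ?_ ?_ <;>
        intro k hk <;> simp only [Finset.mem_Icc] at hk ⊢ <;> omega
    rw [← hrefl]
    have h1 : ∑ k ∈ Finset.Icc 1 n, ((B : ℤ) - v k + 1 - ((u k : ℤ) - 1) +
        (sInf (Z (n + 1 - k)) - B)) = 2 * n - ∑ i ∈ Finset.Icc 1 n, ((u i : ℤ) + (v i : ℤ)) +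
          ∑ k ∈ Finset.Icc 1 n, sInf (Z (n + 1 - k)) := by
      rw [Finset.sum_congr rfl (g := fun k => (2 - ((u k : ℤ) + v k)) + sInf (Z (n + 1 - k)))
        (fun k _ => by ring), Finset.sum_add_distrib, Finset.sum_sub_distrib, Finset.sum_const,
        Nat.card_Icc]
      simp
      ring
    rw [h1]
    ring
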